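/- arXiv:math/9910160 — 3 statements merged into one kernel-verified Lean document; each statement's English description precedes it below -/
import Mathlib

section
/- For every ε ∈ (0,1/2) there is a constant C = C(ε) such that for every n ≥ 1 and every continuous function f : Sⁿ → ℝ with ω₂(f;Sⁿ) ≤ 1 − ε there exists an affine function φ on ℝ^{n+1} with sup_{u∈Sⁿ} |f(u) − φ(u)| ≤ C + (1/4) log₂(n+1). (Upper bound in Theorem 3.7; together with the matching lower bound it yields lim_{n→∞} w₂(Sⁿ)/log₂ n = 1/4.) -/
open Finset

/-- `diffBound m K f c` says that the `m`-th modulus of smoothness of `f` on `K` is at most `c`,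
i.e. `|Δ_h^m f(x)| ≤ c` whenever `x, x+h, …, x+mh ∈ K`. -/
def diffBound {E : Type*} [AddCommGroup E] [Module ℝ E] (m : ℕ) (K : Set E) (f : E → ℝ)
    (c : ℝ) : Prop :=
  ∀ x h : E, (∀ j : ℕ, j ≤ m → x + (j : ℝ) • h ∈ K) →
    |∑ j ∈ Finset.range (m + 1), (-1 : ℝ) ^ (m - j) * (m.choose j : ℝ) * f (x + (j : ℝ) • h)| ≤ c

/-!
Subtracting a linear function, we may assume that `f` vanishes at the vertices. By Hahn–Banach
separation, `f` is within `R` of an affine function as soon as the means of `f` under any two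
finitely supported distributions with the same barycenter `b` differ by less than `2 * R`, so it
suffices that `|𝔼 f| + |𝔼 f - f b| < 2 * R` for every such distribution.

The means are estimated by repeatedly averaging two independent samples: each round costs `c / 2`
(with `c` the bound on the second differences), keeps the barycenter and halves the variance. It
takes about `log₂ (M * v)` rounds to come close to the barycenter when the samples have coordinates
at most `v` and are supported on `M` vertices. Splitting a point into layers of coordinates of
comparable size, a layer of size `q⁻ᵏ` has at most `q ^ (k + 1)` coordinates; sampling vertices
gives `|f x| ≤ c / 2 * H x` up to lower-order terms, where `H` is a discretised entropy, while
sampling the layers themselves gives `|𝔼 f - f b| ≤ c / 2 * (log₂ N - 𝔼 H)`. The entropy cancels in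
the sum, which leaves `2 * R = c / 2 * log₂ N` up to lower-order terms, with `N` the number of
vertices, and `c = 1 - ε` leaves room for these.
-/

lemma two_mul_mem_upperBounds {s : Set ℝ} {A : ℝ} (hs : BddAbove s)
    (h : ∀ B ∈ upperBounds s, A + B / 2 ∈ upperBounds s) : 2 * A ∈ upperBounds s := by
  intro r hr
  have hsup : sSup s ≤ A + sSup s / 2 :=
    csSup_le ⟨r, hr⟩ (h _ fun _ => le_csSup hs)
  linarith [le_csSup hs hr]

namespace diffBound

variable {E : Type*} [AddCommGroup E] [Module ℝ E] {s : Set E} {f : E → ℝ} {c : ℝ}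

lemma nonneg {m : ℕ} (h : diffBound m s f c) {x : E} (hx : x ∈ s) : 0 ≤ c :=
  (abs_nonneg _).trans (h x 0 fun _ _ => by simpa)

lemma sub_linearMap (h : diffBound 2 s f c) (φ : E →ₗ[ℝ] ℝ) :
    diffBound 2 s (fun x => f x - φ x) c := by
  intro x v hxv
  convert h x v hxv using 2
  simp only [sum_range_succ, sum_range_zero, map_add, map_smul, smul_eq_mul]
  norm_num
  ring

lemma abs_midpoint_sub_le (h : diffBound 2 s f c) (hs : Convex ℝ s) {x y : E}
    (hx : x ∈ s) (hy : y ∈ s) : |f (midpoint ℝ x y) - midpoint ℝ (f x) (f y)| ≤ c / 2 := by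
  have hmid : x + (2⁻¹ : ℝ) • (y - x) = midpoint ℝ x y := by
    rw [midpoint_eq_smul_add, invOf_eq_inv]; module
  have hend : x + (2 : ℝ) • (2⁻¹ : ℝ) • (y - x) = y := by module
  have hdiff := h x ((2⁻¹ : ℝ) • (y - x)) (by
    intro j hj
    interval_cases j
    · simpa
    · simpa [hmid] using hs.midpoint_mem hx hy
    · simpa only [Nat.cast_ofNat, hend])
  simp only [sum_range_succ, sum_range_zero, Nat.cast_zero, Nat.cast_one, Nat.cast_ofNat, zero_smul,
    one_smul, add_zero, hmid, hend] at hdiff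
  norm_num at hdiff
  rw [midpoint_eq_smul_add ℝ (f x), invOf_eq_inv, smul_eq_mul]
  rw [abs_le] at hdiff ⊢
  constructor <;> linarith

/-- If `t ≤ 1/2`, the point at parameter `t` is the midpoint of `x` and the point at parameter
`2t`, so the deviation from linear interpolation at `t` is at most `c / 2` plus half of the
deviation at `2t`. -/
lemma abs_convexComb_sub_le_of_bound (h : diffBound 2 s f c) (hs : Convex ℝ s) {D : ℝ}
    (hD : ∀ x ∈ s, ∀ y ∈ s, ∀ t ∈ Set.Icc (0 : ℝ) 1,
      |f ((1 - t) • x + t • y) - ((1 - t) * f x + t * f y)| ≤ D) {x y : E} (hx : x ∈ s)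
    (hy : y ∈ s) {t : ℝ} (ht : t ∈ Set.Icc (0 : ℝ) 1) :
    |f ((1 - t) • x + t • y) - ((1 - t) * f x + t * f y)| ≤ c / 2 + D / 2 := by
  wlog ht2 : t ≤ 1 / 2 generalizing x y t
  · have := this hy hx (t := 1 - t) ⟨by linarith [ht.2], by linarith [ht.1]⟩ (by linarith)
    rwa [sub_sub_cancel, add_comm, add_comm (t * f y)] at this
  have ht' : 2 * t ∈ Set.Icc (0 : ℝ) 1 := ⟨by linarith [ht.1], by linarith⟩
  have hz : (1 - 2 * t) • x + (2 * t) • y ∈ s :=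
    hs hx hy (by linarith [ht'.2]) ht'.1 (by ring)
  have hmid : midpoint ℝ x ((1 - 2 * t) • x + (2 * t) • y) = (1 - t) • x + t • y := by
    rw [midpoint_eq_smul_add, invOf_eq_inv]; module
  have hstep := h.abs_midpoint_sub_le hs hx hz
  have hrest := hD x hx y hy _ ht'
  rw [hmid, midpoint_eq_smul_add ℝ (f x), invOf_eq_inv, smul_eq_mul] at hstep
  rw [abs_le] at *
  constructor <;> linarith [hstep.1, hstep.2, hrest.1, hrest.2]

lemma abs_convexComb_sub_le (h : diffBound 2 s f c) (hs : Convex ℝ s) {K : ℝ}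
    (hK : ∀ x ∈ s, |f x| ≤ K) {x y : E} (hx : x ∈ s) (hy : y ∈ s) {a b : ℝ} (ha : 0 ≤ a)
    (hb : 0 ≤ b) (hab : a + b = 1) : |f (a • x + b • y) - (a * f x + b * f y)| ≤ c := by
  let deviations : Set ℝ := {r | ∃ x ∈ s, ∃ y ∈ s, ∃ t ∈ Set.Icc (0 : ℝ) 1,
    |f ((1 - t) • x + t • y) - ((1 - t) * f x + t * f y)| = r}
  have hbdd : BddAbove deviations := by
    refine ⟨2 * K, ?_⟩
    rintro _ ⟨x, hx, y, hy, t, ht, rfl⟩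
    have hx' := abs_le.1 (hK x hx)
    have hy' := abs_le.1 (hK y hy)
    have hz := abs_le.1 (hK _ (hs hx hy (sub_nonneg.2 ht.2) ht.1 (sub_add_cancel _ _)))
    have ht₀ := ht.1
    have ht₁ := ht.2
    rw [abs_le]
    constructor <;> nlinarith
  have hle : 2 * (c / 2) ∈ upperBounds deviations := by
    refine two_mul_mem_upperBounds hbdd fun D hD => ?_
    rintro _ ⟨x, hx, y, hy, t, ht, rfl⟩
    exact h.abs_convexComb_sub_le_of_bound hs
      (fun x hx y hy t ht => hD ⟨x, hx, y, hy, t, ht, rfl⟩) hx hy ht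
  obtain rfl : a = 1 - b := by linarith
  exact (hle ⟨x, hx, y, hy, b, ⟨hb, by linarith⟩, rfl⟩).trans_eq (by ring)

end diffBound

section Cone

variable {ι : Type*} [Fintype ι]

lemma exists_eq_sum_smul_mem_stdSimplex [Nonempty ι] {w : ι → ℝ} (hw : 0 ≤ w) :
    ∃ x ∈ stdSimplex ℝ ι, w = (∑ i, w i) • x := by
  classical
  have hsum : 0 ≤ ∑ i, w i := sum_nonneg fun i _ => hw i
  rcases hsum.eq_or_lt with h0 | hpos
  · refine ⟨_, single_mem_stdSimplex ℝ (Classical.arbitrary ι), ?_⟩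
    rw [← h0, zero_smul]
    exact (Fintype.sum_eq_zero_iff_of_nonneg hw).1 h0.symm
  · refine ⟨(∑ i, w i)⁻¹ • w, ⟨fun i => mul_nonneg (inv_nonneg.2 hsum) (hw i), ?_⟩, ?_⟩
    · simp only [Pi.smul_apply, smul_eq_mul, ← mul_sum]
      exact inv_mul_cancel₀ hpos.ne'
    · rw [smul_inv_smul₀ hpos.ne']

/-- The extension of a function on the simplex to the nonnegative orthant that is homogeneous of
degree one. At the apex, where `(∑ i, w i)⁻¹` is a junk value, it vanishes as it should. -/
noncomputable def homogExt (f : (ι → ℝ) → ℝ) (w : ι → ℝ) : ℝ :=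
  (∑ i, w i) * f ((∑ i, w i)⁻¹ • w)

lemma homogExt_zero (f : (ι → ℝ) → ℝ) : homogExt f 0 = 0 := by simp [homogExt]

lemma homogExt_smul (f : (ι → ℝ) → ℝ) {x : ι → ℝ} (hx : x ∈ stdSimplex ℝ ι) (m : ℝ) :
    homogExt f (m • x) = m * f x := by
  have hm : ∑ i, (m • x) i = m := by simp [← mul_sum, hx.2]
  rw [homogExt, hm]
  rcases eq_or_ne m 0 with rfl | h0
  · simp
  · rw [inv_smul_smul₀ h0]

lemma homogExt_of_mem (f : (ι → ℝ) → ℝ) {x : ι → ℝ} (hx : x ∈ stdSimplex ℝ ι) :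
    homogExt f x = f x := by
  simpa using homogExt_smul f hx 1

variable [Nonempty ι] {f : (ι → ℝ) → ℝ} {c K : ℝ}

lemma abs_homogExt_le (hK : ∀ x ∈ stdSimplex ℝ ι, |f x| ≤ K) {w : ι → ℝ} (hw : 0 ≤ w) :
    |homogExt f w| ≤ K * ∑ i, w i := by
  obtain ⟨x, hx, hwx⟩ := exists_eq_sum_smul_mem_stdSimplex hw
  have hsum : 0 ≤ ∑ i, w i := sum_nonneg fun i _ => hw i
  conv_lhs => rw [hwx]
  rw [homogExt_smul f hx, abs_mul, abs_of_nonneg hsum, mul_comm]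
  exact mul_le_mul_of_nonneg_right (hK x hx) hsum

namespace diffBound

variable (h : diffBound 2 (stdSimplex ℝ ι) f c) (hK : ∀ x ∈ stdSimplex ℝ ι, |f x| ≤ K)
include h hK

lemma abs_homogExt_add_sub_le {u v : ι → ℝ} (hu : 0 ≤ u) (hv : 0 ≤ v) :
    |homogExt f (u + v) - (homogExt f u + homogExt f v)| ≤ c * ∑ i, (u + v) i := by
  obtain ⟨x, hx, hux⟩ := exists_eq_sum_smul_mem_stdSimplex hu
  obtain ⟨y, hy, hvy⟩ := exists_eq_sum_smul_mem_stdSimplex hv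
  have ha : 0 ≤ ∑ i, u i := sum_nonneg fun i _ => hu i
  have hb : 0 ≤ ∑ i, v i := sum_nonneg fun i _ => hv i
  have hsum : ∑ i, (u + v) i = ∑ i, u i + ∑ i, v i := by simp [sum_add_distrib]
  rw [hsum]
  generalize ∑ i, u i = a at *
  generalize ∑ i, v i = b at *
  subst hux hvy
  rcases (add_nonneg ha hb).eq_or_lt with h0 | hpos
  · obtain ⟨rfl, rfl⟩ : a = 0 ∧ b = 0 := ⟨by linarith, by linarith⟩
    simp [homogExt_zero]
  have hab : a / (a + b) + b / (a + b) = 1 := by field_simp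
  have hz := convex_stdSimplex ℝ ι hx hy (by positivity) (by positivity) hab
  have hxy : a • x + b • y = (a + b) • ((a / (a + b)) • x + (b / (a + b)) • y) := by
    simp only [smul_add, smul_smul, mul_div_cancel₀ _ hpos.ne']
  have hdev := h.abs_convexComb_sub_le (convex_stdSimplex ℝ ι) hK hx hy
    (by positivity) (by positivity) hab
  rw [hxy, homogExt_smul f hz, homogExt_smul f hx, homogExt_smul f hy, mul_comm c]
  calc |_| = |(a + b) * (f ((a / (a + b)) • x + (b / (a + b)) • y) -
        (a / (a + b) * f x + b / (a + b) * f y))| := by congr 1; field_simp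
    _ ≤ (a + b) * c := by
      rw [abs_mul, abs_of_pos hpos]
      exact mul_le_mul_of_nonneg_left hdev hpos.le

lemma abs_homogExt_sum_sub_le {α : Type*} (t : Finset α) {w : α → ι → ℝ} (hw : ∀ k, 0 ≤ w k) :
    |homogExt f (∑ k ∈ t, w k) - ∑ k ∈ t, homogExt f (w k)| ≤
      #t * (c * ∑ i, (∑ k ∈ t, w k) i) := by
  classical
  have hc : 0 ≤ c := h.nonneg (single_mem_stdSimplex ℝ (Classical.arbitrary ι))
  induction t using Finset.induction_on with
  | empty => simp [homogExt_zero]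
  | insert a t ha ih =>
    have ht : 0 ≤ ∑ k ∈ t, w k := sum_nonneg fun k _ => hw k
    have hadd := h.abs_homogExt_add_sub_le hK (hw a) ht
    have hmono : #t * (c * ∑ i, (∑ k ∈ t, w k) i) ≤ #t * (c * ∑ i, (w a + ∑ k ∈ t, w k) i) := by
      gcongr with i
      exact le_add_of_nonneg_left (hw a i)
    rw [sum_insert ha, sum_insert ha, card_insert_of_notMem ha]
    push_cast
    rw [abs_le] at *
    constructor <;> linarith [hadd.1, hadd.2, ih.1, ih.2]

lemma abs_sub_le_add_sum_abs_sub {x y : ι → ℝ} (hx : x ∈ stdSimplex ℝ ι)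
    (hy : y ∈ stdSimplex ℝ ι) : |f x - f y| ≤ 2 * c + K * ∑ i, |x i - y i| := by
  have hm : 0 ≤ x ⊓ y := le_inf hx.1 hy.1
  have hu : 0 ≤ x - x ⊓ y := sub_nonneg.2 inf_le_left
  have hv : 0 ≤ y - x ⊓ y := sub_nonneg.2 inf_le_right
  have hfx := h.abs_homogExt_add_sub_le hK hm hu
  have hfy := h.abs_homogExt_add_sub_le hK hm hv
  rw [add_sub_cancel, homogExt_of_mem f hx, hx.2] at hfx
  rw [add_sub_cancel, homogExt_of_mem f hy, hy.2] at hfy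
  have hfu := abs_homogExt_le hK hu
  have hfv := abs_homogExt_le hK hv
  have hl1 : ∑ i, |x i - y i| = ∑ i, (x - x ⊓ y) i + ∑ i, (y - x ⊓ y) i := by
    rw [← sum_add_distrib]
    refine sum_congr rfl fun i _ => ?_
    simp only [Pi.sub_apply, Pi.inf_apply]
    linarith [max_sub_min_eq_abs' (x i) (y i), min_add_max (x i) (y i)]
  rw [hl1, mul_add]
  rw [abs_le] at *
  constructor <;> linarith [hfx.1, hfx.2, hfy.1, hfy.2, hfu.1, hfu.2, hfv.1, hfv.2]

end diffBound

end Cone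

section Sampling

lemma exists_nat_le_two_pow {B : ℝ} (hB : 1 ≤ B) :
    ∃ p : ℕ, B ≤ 2 ^ p ∧ p ≤ Real.logb 2 B + 1 := by
  refine ⟨⌈Real.logb 2 B⌉₊, ?_, (Nat.ceil_lt_add_one (Real.logb_nonneg one_lt_two hB)).le⟩
  rw [← Real.rpow_natCast, ← Real.logb_le_iff_le_rpow one_lt_two (by linarith)]
  exact Nat.le_ceil _

lemma abs_le_mul_sq_add_inv_div_two {a : ℝ} (ha : 0 < a) (t : ℝ) :
    |t| ≤ (a * t ^ 2 + a⁻¹) / 2 := by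
  have hnonneg : 0 ≤ a⁻¹ * (a * |t| - 1) ^ 2 := by positivity
  have hexpand : a⁻¹ * (a * |t| - 1) ^ 2 = a * t ^ 2 - 2 * |t| + a⁻¹ := by
    rw [← sq_abs t]
    field_simp
    ring
  linarith

variable {κ : Type*} [Fintype κ] {μ : κ → ℝ}

lemma abs_sum_mul_le (hμ : 0 ≤ μ) {g b : κ → ℝ} (hg : ∀ j, |g j| ≤ b j) :
    |∑ j, μ j * g j| ≤ ∑ j, μ j * b j :=
  (abs_sum_le_sum_abs _ _).trans <| sum_le_sum fun j _ => by
    rw [abs_mul, abs_of_nonneg (hμ j)]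
    exact mul_le_mul_of_nonneg_left (hg j) (hμ j)

lemma sum_mul_add_mul (hμ : μ ∈ stdSimplex ℝ κ) (A B : ℝ) (g : κ → ℝ) :
    ∑ j, μ j * (A + B * g j) = A + B * ∑ j, μ j * g j := by
  simp only [mul_add, sum_add_distrib, ← sum_mul, hμ.2, one_mul, mul_left_comm (μ _), ← mul_sum]

/-- The distribution of a pair of independent samples from the distribution `μ`. -/
def pairWeight (μ : κ → ℝ) (z : κ × κ) : ℝ := μ z.1 * μ z.2

/-- The average of a pair of samples of `x`, regarded as a new random variable on `κ × κ`. -/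
noncomputable def pairMidpoint {V : Type*} [AddCommGroup V] [Module ℝ V] (x : κ → V)
    (z : κ × κ) : V :=
  midpoint ℝ (x z.1) (x z.2)

/-- The variance of the random variable `g` under the distribution `μ` on a finite type. -/
noncomputable def weightedVariance (μ g : κ → ℝ) : ℝ := ∑ j, μ j * (g j - ∑ k, μ k * g k) ^ 2

lemma sum_pairWeight_mul (u v : κ → ℝ) :
    ∑ z, pairWeight μ z * (u z.1 * v z.2) = (∑ j, μ j * u j) * ∑ j, μ j * v j := by
  rw [Fintype.sum_prod_type, sum_mul_sum]
  exact sum_congr rfl fun i _ => sum_congr rfl fun j _ => by rw [pairWeight]; ring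

lemma pairWeight_mem_stdSimplex (hμ : μ ∈ stdSimplex ℝ κ) :
    pairWeight μ ∈ stdSimplex ℝ (κ × κ) :=
  ⟨fun z => mul_nonneg (hμ.1 _) (hμ.1 _), by simpa [hμ.2] using sum_pairWeight_mul (μ := μ) 1 1⟩

lemma sum_pairWeight_smul_pairMidpoint {V : Type*} [AddCommGroup V] [Module ℝ V]
    (hμ : μ ∈ stdSimplex ℝ κ) (x : κ → V) :
    ∑ z, pairWeight μ z • pairMidpoint x z = ∑ j, μ j • x j := by
  have hfst : ∑ z : κ × κ, pairWeight μ z • x z.1 = ∑ j, μ j • x j := by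
    rw [Fintype.sum_prod_type]
    simp only [pairWeight, ← sum_smul, ← mul_sum, hμ.2, mul_one]
  have hsnd : ∑ z : κ × κ, pairWeight μ z • x z.2 = ∑ j, μ j • x j := by
    rw [Fintype.sum_prod_type_right]
    simp only [pairWeight, ← sum_smul, ← sum_mul, hμ.2, one_mul]
  simp only [pairMidpoint, midpoint_eq_smul_add, invOf_eq_inv, smul_comm (pairWeight μ _) (2⁻¹ : ℝ),
    smul_add, sum_add_distrib, ← smul_sum, hfst, hsnd]
  module

lemma weightedVariance_eq (hμ : μ ∈ stdSimplex ℝ κ) (g : κ → ℝ) :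
    weightedVariance μ g = ∑ j, μ j * g j ^ 2 - (∑ j, μ j * g j) ^ 2 := by
  rw [weightedVariance]
  set m := ∑ k, μ k * g k with hm
  calc ∑ j, μ j * (g j - m) ^ 2
      = ∑ j, (μ j * g j ^ 2 - 2 * m * (μ j * g j) + m ^ 2 * μ j) :=
        sum_congr rfl fun j _ => by ring
    _ = ∑ j, μ j * g j ^ 2 - 2 * m * m + m ^ 2 * 1 := by
        rw [sum_add_distrib, sum_sub_distrib, ← mul_sum, ← mul_sum, ← hm, hμ.2]
    _ = ∑ j, μ j * g j ^ 2 - m ^ 2 := by ring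

lemma weightedVariance_nonneg (hμ : 0 ≤ μ) (g : κ → ℝ) : 0 ≤ weightedVariance μ g :=
  sum_nonneg fun j _ => mul_nonneg (hμ j) (sq_nonneg _)

lemma weightedVariance_le_sum_mul_sq (hμ : μ ∈ stdSimplex ℝ κ) (g : κ → ℝ) :
    weightedVariance μ g ≤ ∑ j, μ j * g j ^ 2 := by
  rw [weightedVariance_eq hμ]
  exact sub_le_self _ (sq_nonneg _)

lemma weightedVariance_pairMidpoint (hμ : μ ∈ stdSimplex ℝ κ) (g : κ → ℝ) :
    weightedVariance (pairWeight μ) (pairMidpoint g) = weightedVariance μ g / 2 := by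
  have hmean := sum_pairWeight_smul_pairMidpoint hμ g
  simp only [smul_eq_mul] at hmean
  have hsq : ∑ z, pairWeight μ z * pairMidpoint g z ^ 2 =
      (∑ j, μ j * g j ^ 2 + (∑ j, μ j * g j) ^ 2) / 2 := by
    have hexpand : ∀ z : κ × κ, pairWeight μ z * pairMidpoint g z ^ 2 =
        4⁻¹ * (pairWeight μ z * (g z.1 ^ 2 * 1) + 2 * (pairWeight μ z * (g z.1 * g z.2)) +
          pairWeight μ z * (1 * g z.2 ^ 2)) := fun z => by
      rw [pairMidpoint, midpoint_eq_smul_add, invOf_eq_inv, smul_eq_mul]; ring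
    simp only [hexpand, ← mul_sum, sum_add_distrib]
    rw [sum_pairWeight_mul (fun j => g j ^ 2) fun _ => 1, sum_pairWeight_mul g g,
      sum_pairWeight_mul (fun _ => 1) fun j => g j ^ 2]
    simp only [mul_one, hμ.2]
    ring
  rw [weightedVariance_eq (pairWeight_mem_stdSimplex hμ), weightedVariance_eq hμ, hmean, hsq]
  ring

variable {ι : Type*} [Fintype ι]

lemma sum_smul_mem_stdSimplex (hμ : μ ∈ stdSimplex ℝ κ) {x : κ → ι → ℝ}
    (hx : ∀ j, x j ∈ stdSimplex ℝ ι) : ∑ j, μ j • x j ∈ stdSimplex ℝ ι :=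
  (convex_stdSimplex ℝ ι).sum_mem (fun j _ => hμ.1 j) hμ.2 fun j _ => hx j

lemma mul_sum_sq_le {x : ι → ℝ} (hx : x ∈ stdSimplex ℝ ι) {m v : ℝ} (hv : ∀ i, m * x i ≤ v) :
    m * ∑ i, x i ^ 2 ≤ v :=
  calc m * ∑ i, x i ^ 2 = ∑ i, m * x i * x i := by
        rw [mul_sum]
        exact sum_congr rfl fun i _ => by ring
    _ ≤ ∑ i, v * x i := sum_le_sum fun i _ => mul_le_mul_of_nonneg_right (hv i) (hx.1 i)
    _ = v := by rw [← mul_sum, hx.2, mul_one]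

lemma sum_mul_abs_sub_mean_le {a : ℝ} (ha : 0 < a) (hμ : μ ∈ stdSimplex ℝ κ) (g : κ → ℝ) :
    ∑ j, μ j * |g j - ∑ k, μ k * g k| ≤ (a * weightedVariance μ g + a⁻¹) / 2 :=
  calc ∑ j, μ j * |g j - ∑ k, μ k * g k|
      ≤ ∑ j, μ j * ((a * (g j - ∑ k, μ k * g k) ^ 2 + a⁻¹) / 2) :=
        sum_le_sum fun j _ =>
          mul_le_mul_of_nonneg_left (abs_le_mul_sq_add_inv_div_two ha _) (hμ.1 j)
    _ = ∑ j, (a / 2 * (μ j * (g j - ∑ k, μ k * g k) ^ 2) + a⁻¹ / 2 * μ j) :=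
        sum_congr rfl fun j _ => by ring
    _ = (a * weightedVariance μ g + a⁻¹) / 2 := by
        rw [sum_add_distrib, ← mul_sum, ← mul_sum, hμ.2, weightedVariance]
        ring

lemma sum_mul_sum_abs_sub_mean_le {s : Finset ι} {a : ℝ} (ha : 0 < a) (hμ : μ ∈ stdSimplex ℝ κ)
    {x : κ → ι → ℝ} (hx : ∀ j, 0 ≤ x j) (hs : ∀ i ∉ s, (∑ j, μ j • x j) i = 0) :
    ∑ j, μ j * ∑ i, |x j i - (∑ k, μ k • x k) i| ≤
      (a * ∑ i, weightedVariance μ (x · i) + #s / a) / 2 := by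
  simp only [Finset.sum_apply, Pi.smul_apply, smul_eq_mul] at hs ⊢
  have hzero : ∀ i ∉ s, ∑ j, μ j * |x j i - ∑ k, μ k * x k i| = 0 := fun i hi => by
    simp only [hs i hi, sub_zero, abs_of_nonneg (hx _ i)]
  calc ∑ j, μ j * ∑ i, |x j i - ∑ k, μ k * x k i|
      = ∑ i, ∑ j, μ j * |x j i - ∑ k, μ k * x k i| := by simp only [mul_sum]; exact sum_comm
    _ = ∑ i ∈ s, ∑ j, μ j * |x j i - ∑ k, μ k * x k i| :=
        (sum_subset (subset_univ s) fun i _ hi => hzero i hi).symm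
    _ ≤ ∑ i ∈ s, (a * weightedVariance μ (x · i) + a⁻¹) / 2 :=
        sum_le_sum fun i _ => sum_mul_abs_sub_mean_le ha hμ _
    _ = (a * ∑ i ∈ s, weightedVariance μ (x · i) + #s / a) / 2 := by
        rw [← sum_div, sum_add_distrib, ← mul_sum, sum_const, nsmul_eq_mul, ← div_eq_mul_inv]
    _ ≤ _ := by
        gcongr
        · exact fun i _ _ => weightedVariance_nonneg hμ.1 _
        · exact subset_univ s

namespace diffBound

variable [Nonempty ι] {f : (ι → ℝ) → ℝ} {c K : ℝ} (h : diffBound 2 (stdSimplex ℝ ι) f c)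
  (hK : ∀ x ∈ stdSimplex ℝ ι, |f x| ≤ K)
include h hK

lemma abs_sum_mul_sub_le_variance {s : Finset ι} {a : ℝ} (ha : 0 < a)
    (hμ : μ ∈ stdSimplex ℝ κ) {x : κ → ι → ℝ} (hx : ∀ j, x j ∈ stdSimplex ℝ ι)
    (hs : ∀ i ∉ s, (∑ j, μ j • x j) i = 0) :
    |∑ j, μ j * f (x j) - f (∑ j, μ j • x j)| ≤
      2 * c + K / 2 * (a * ∑ i, weightedVariance μ (x · i) + #s / a) := by
  have hb := sum_smul_mem_stdSimplex hμ hx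
  have hK₀ : 0 ≤ K := (abs_nonneg _).trans (hK _ hb)
  calc |∑ j, μ j * f (x j) - f (∑ j, μ j • x j)|
      = |∑ j, μ j * (f (x j) - f (∑ j, μ j • x j))| := by
        simp only [mul_sub, sum_sub_distrib, ← sum_mul, hμ.2, one_mul]
    _ ≤ ∑ j, μ j * (2 * c + K * ∑ i, |x j i - (∑ k, μ k • x k) i|) :=
        abs_sum_mul_le hμ.1 fun j => h.abs_sub_le_add_sum_abs_sub hK (hx j) hb
    _ = 2 * c + K * ∑ j, μ j * ∑ i, |x j i - (∑ k, μ k • x k) i| := by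
        simp only [mul_add, sum_add_distrib, ← sum_mul, hμ.2, one_mul, mul_left_comm _ K, ← mul_sum]
    _ ≤ 2 * c + K * ((a * ∑ i, weightedVariance μ (x · i) + #s / a) / 2) := by
        gcongr
        exact sum_mul_sum_abs_sub_mean_le ha hμ (fun j => (hx j).1) hs
    _ = _ := by ring

/-- Replacing each sample by the average of two independent samples keeps the barycenter, costs
`c / 2`, and halves the variance. -/
lemma abs_sum_mul_sub_le_variance_div_pow {s : Finset ι} {a : ℝ} (ha : 0 < a) (p : ℕ)
    (hμ : μ ∈ stdSimplex ℝ κ) {x : κ → ι → ℝ} (hx : ∀ j, x j ∈ stdSimplex ℝ ι)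
    (hs : ∀ i ∉ s, (∑ j, μ j • x j) i = 0) :
    |∑ j, μ j * f (x j) - f (∑ j, μ j • x j)| ≤
      c / 2 * p + (2 * c + K / 2 * (a * (∑ i, weightedVariance μ (x · i)) / 2 ^ p + #s / a)) := by
  induction p generalizing κ with
  | zero => simpa using h.abs_sum_mul_sub_le_variance hK ha hμ hx hs
  | succ p ih =>
    have hcoord (z : κ × κ) (i : ι) : pairMidpoint x z i = pairMidpoint (x · i) z := by
      simp [pairMidpoint, midpoint_eq_smul_add]
    have hrest := ih (pairWeight_mem_stdSimplex hμ) (x := pairMidpoint x)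
      (fun z => (convex_stdSimplex ℝ ι).midpoint_mem (hx _) (hx _))
      (by rwa [sum_pairWeight_smul_pairMidpoint hμ])
    rw [sum_pairWeight_smul_pairMidpoint hμ] at hrest
    simp only [hcoord, weightedVariance_pairMidpoint hμ, ← sum_div] at hrest
    have hstep : |∑ j, μ j * f (x j) - ∑ z, pairWeight μ z * f (pairMidpoint x z)| ≤ c / 2 := by
      have hmean := sum_pairWeight_smul_pairMidpoint hμ (f ∘ x)
      simp only [smul_eq_mul, Function.comp_apply] at hmean
      rw [← hmean, ← sum_sub_distrib]
      simp only [← mul_sub]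
      refine (abs_sum_mul_le (pairWeight_mem_stdSimplex hμ).1 (b := fun _ => c / 2)
        fun z => ?_).trans_eq ?_
      · rw [abs_sub_comm]
        exact h.abs_midpoint_sub_le (convex_stdSimplex ℝ ι) (hx z.1) (hx z.2)
      · rw [← sum_mul, (pairWeight_mem_stdSimplex hμ).2, one_mul]
    calc _ ≤ _ := abs_sub_le _ (∑ z, pairWeight μ z * f (pairMidpoint x z)) _
      _ ≤ _ := add_le_add hstep hrest
      _ = _ := by push_cast; ring

lemma abs_sum_mul_sub_homogExt_le {s : Finset ι} {a : ℝ} (ha : 0 < a) (p : ℕ) {ν : κ → ℝ}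
    (hν : 0 ≤ ν) {x : κ → ι → ℝ} (hx : ∀ j, x j ∈ stdSimplex ℝ ι)
    (hs : ∀ i ∉ s, (∑ j, ν j • x j) i = 0) :
    |∑ j, ν j * f (x j) - homogExt f (∑ j, ν j • x j)| ≤
      (∑ j, ν j) * (c / 2 * p + 2 * c + K / 2 * (#s / a)) +
        K / 2 * (a * (∑ j, ν j * ∑ i, x j i ^ 2) / 2 ^ p) := by
  have hQ : 0 ≤ ∑ j, ν j := sum_nonneg fun j _ => hν j
  rcases hQ.eq_or_lt with h0 | hpos
  · rw [(Fintype.sum_eq_zero_iff_of_nonneg hν).1 h0.symm]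
    simp [homogExt_zero]
  have : Nonempty κ := univ_nonempty_iff.1 (nonempty_of_sum_ne_zero hpos.ne')
  obtain ⟨μ, hμ, hνμ⟩ := exists_eq_sum_smul_mem_stdSimplex hν
  generalize ∑ j, ν j = Q at *
  subst hνμ
  have hK₀ : 0 ≤ K := (abs_nonneg _).trans (hK _ (sum_smul_mem_stdSimplex hμ hx))
  have hvar : ∑ i, weightedVariance μ (x · i) ≤ ∑ j, μ j * ∑ i, x j i ^ 2 := by
    simp only [mul_sum]
    rw [sum_comm]
    exact sum_le_sum fun i _ => weightedVariance_le_sum_mul_sq hμ _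
  simp only [Pi.smul_apply, smul_eq_mul, mul_assoc, mul_smul, ← mul_sum, ← smul_sum, mul_eq_zero,
    hpos.ne', false_or] at hs ⊢
  rw [homogExt_smul f (sum_smul_mem_stdSimplex hμ hx), ← mul_sub, abs_mul, abs_of_nonneg hQ]
  calc _ ≤ Q * (c / 2 * p + (2 * c +
        K / 2 * (a * (∑ j, μ j * ∑ i, x j i ^ 2) / 2 ^ p + #s / a))) := by
        refine mul_le_mul_of_nonneg_left
          ((h.abs_sum_mul_sub_le_variance_div_pow hK ha p hμ hx hs).trans ?_) hQ
        gcongr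
    _ = _ := by ring

lemma abs_sum_mul_homogExt_sub_le {s : Finset ι} {M v q : ℝ} (hμ : 0 ≤ μ) (hμ₁ : ∑ j, μ j ≤ 1)
    {w : κ → ι → ℝ} (hw : ∀ j, 0 ≤ w j) (hs : ∀ i ∉ s, (∑ j, μ j • w j) i = 0)
    (hv : ∀ j i, w j i ≤ v) (hw₁ : ∑ j, μ j * ∑ i, w j i ≤ 1) (hM : #s ≤ M) (hq : 0 < q)
    (hMvq : 1 ≤ M * v * q ^ 2) :
    |∑ j, μ j * homogExt f (w j) - homogExt f (∑ j, μ j • w j)| ≤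
      (∑ j, μ j * ∑ i, w j i) * (c / 2 * (Real.logb 2 (M * v * q ^ 2) + 5)) + K / q := by
  classical
  have hvertex := single_mem_stdSimplex ℝ (Classical.arbitrary ι)
  have hc : 0 ≤ c := h.nonneg hvertex
  have hK₀ : 0 ≤ K := (abs_nonneg _).trans (hK _ hvertex)
  have hMv : 0 < M * v := pos_of_mul_pos_left (zero_lt_one.trans_le hMvq) (sq_nonneg q)
  have hM₀ : 0 < M := ((Nat.cast_nonneg _).trans hM).lt_of_ne (left_ne_zero_of_mul hMv.ne').symm
  have hv₀ : 0 < v := pos_of_mul_pos_right hMv hM₀.le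
  have hmass (j : κ) : 0 ≤ ∑ i, w j i := sum_nonneg fun i _ => hw j i
  choose x hx hwx using fun j => exists_eq_sum_smul_mem_stdSimplex (hw j)
  obtain ⟨p, hBp, hpB⟩ := exists_nat_le_two_pow hMvq
  have hf (j : κ) : homogExt f (w j) = (∑ i, w j i) * f (x j) := by
    conv_lhs => rw [hwx j, homogExt_smul f (hx j)]
  have hcone := h.abs_sum_mul_sub_homogExt_le hK (s := s) (mul_pos hM₀ hq) p
    (fun j => mul_nonneg (hμ j) (hmass j)) hx
  simp only [mul_smul, ← hwx, mul_assoc, ← hf] at hcone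
  refine (hcone hs).trans ?_
  set Q := ∑ j, μ j * ∑ i, w j i
  have hQ : 0 ≤ Q := sum_nonneg fun j _ => mul_nonneg (hμ j) (hmass j)
  have hcard : #s / (M * q) ≤ 1 / q := by
    rw [← div_div]
    gcongr
    exact div_le_one_of_le₀ hM hM₀.le
  have hvar : M * (q * ∑ j, μ j * ((∑ i, w j i) * ∑ i, x j i ^ 2)) / 2 ^ p ≤ 1 / q := by
    rw [div_le_div_iff₀ (by positivity) hq]
    calc _ ≤ M * (q * ∑ j, μ j * v) * q := by
          gcongr with j
          exacts [hμ j, mul_sum_sq_le (hx j) fun i => (congrFun (hwx j) i).ge.trans (hv j i)]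
      _ ≤ M * (q * (1 * v)) * q := by rw [← sum_mul]; gcongr
      _ ≤ 1 * 2 ^ p := by linarith
  calc _ ≤ Q * (c / 2 * (Real.logb 2 (M * v * q ^ 2) + 1) + 2 * c + K / 2 * (1 / q)) +
        K / 2 * (1 / q) := by gcongr
    _ = Q * (c / 2 * (Real.logb 2 (M * v * q ^ 2) + 5)) + (Q + 1) * (K / q / 2) := by ring
    _ ≤ Q * (c / 2 * (Real.logb 2 (M * v * q ^ 2) + 5)) + (1 + 1) * (K / q / 2) := by gcongr
    _ = _ := by ring

lemma abs_homogExt_le_of_vertices_eq_zero [DecidableEq ι] (hf : ∀ i, f (Pi.single i 1) = 0)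
    {s : Finset ι} {M q : ℝ} {w : ι → ℝ} (hw : 0 ≤ w) (hs : ∀ i ∉ s, w i = 0)
    (hw₁ : ∑ i, w i ≤ 1) (hM : #s ≤ M) (hq : 0 < q) (hMq : 1 ≤ M * q ^ 2) :
    |homogExt f w| ≤ (∑ i, w i) * (c / 2 * (Real.logb 2 (M * q ^ 2) + 5)) + K / q := by
  have hsum : ∑ i, w i • (Pi.single i 1 : ι → ℝ) = w := (pi_eq_sum_univ' w).symm
  have hvertex := h.abs_sum_mul_homogExt_sub_le hK (v := 1) hw hw₁ (w := fun i => Pi.single i 1)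
    (fun i => Pi.single_nonneg.2 zero_le_one) (by rwa [hsum])
    (fun i k => (Pi.single_apply i (1 : ℝ) k).trans_le (by split_ifs <;> norm_num)) (by simpa) hM hq
    (by simpa)
  simpa [hsum, homogExt_of_mem f (single_mem_stdSimplex ℝ _), hf] using hvertex

lemma abs_le_of_vertices_eq_zero [DecidableEq ι] (hf : ∀ i, f (Pi.single i 1) = 0) {x : ι → ℝ}
    (hx : x ∈ stdSimplex ℝ ι) : |f x| ≤ c * (Real.logb 2 (Fintype.card ι) + 7) := by
  have hcard : (1 : ℝ) ≤ Fintype.card ι := mod_cast Fintype.card_pos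
  have hlog : Real.logb 2 (Fintype.card ι * 2 ^ 2) = Real.logb 2 (Fintype.card ι) + 2 := by
    rw [Real.logb_mul (by positivity) (by norm_num), Real.logb_pow,
      Real.logb_self_eq_one one_lt_two]
    norm_num
  have hbdd : BddAbove ((|f ·|) '' stdSimplex ℝ ι) := ⟨K, Set.forall_mem_image.2 hK⟩
  have hle := two_mul_mem_upperBounds hbdd (A := c / 2 * (Real.logb 2 (Fintype.card ι) + 7))
    fun B hB => Set.forall_mem_image.2 fun x hx => by
      have hstep := h.abs_homogExt_le_of_vertices_eq_zero
        (fun x hx => hB (Set.mem_image_of_mem _ hx)) hf (s := univ) hx.1 (by simp) hx.2.le le_rfl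
        zero_lt_two (by rw [card_univ]; linarith)
      rw [homogExt_of_mem f hx, hx.2, card_univ, hlog] at hstep
      linarith
  exact (hle (Set.mem_image_of_mem _ hx)).trans_eq (by ring)

end diffBound

end Sampling

section Layers

/-- The scale of a mass `v ∈ [0, 1]` relative to the base `q`: the largest `k ≤ T` with
`v ≤ q⁻ᵏ`. -/
noncomputable def massLevel (q : ℝ) (T : ℕ) (v : ℝ) : ℕ :=
  Nat.findGreatest (fun k => v * q ^ k ≤ 1) T

/-- The part of the vector `x` consisting of its coordinates of level `k`. -/
noncomputable def massLayer {ι : Type*} (q : ℝ) (T k : ℕ) (x : ι → ℝ) (i : ι) : ℝ :=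
  if massLevel q T (x i) = k then x i else 0

/-- The level of a coordinate of the probability vector `x` picked at random according to `x`: a
discretised Shannon entropy of `x`, in units of `log q`. -/
noncomputable def meanLevel {ι : Type*} [Fintype ι] (q : ℝ) (T : ℕ) (x : ι → ℝ) : ℝ :=
  ∑ i, x i * massLevel q T (x i)

variable {ι : Type*} {q : ℝ} {T : ℕ} {x : ι → ℝ}

lemma massLayer_nonneg (hx : 0 ≤ x) (k : ℕ) : 0 ≤ massLayer q T k x := fun i => by
  rw [massLayer]
  split_ifs
  exacts [hx i, le_rfl]

lemma massLayer_le_inv_pow (hq : 0 < q) (hx : ∀ i, x i ≤ 1) (k : ℕ) (i : ι) :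
    massLayer q T k x i ≤ (q ^ k)⁻¹ := by
  rw [massLayer]
  split_ifs with hk
  · have hspec : x i * q ^ massLevel q T (x i) ≤ 1 :=
      Nat.findGreatest_spec (P := fun k => x i * q ^ k ≤ 1) T.zero_le (by simpa using hx i)
    rw [hk] at hspec
    exact (le_mul_inv_iff₀ (by positivity)).2 hspec |>.trans_eq (one_mul _)
  · positivity

lemma sum_massLayer_apply (x : ι → ℝ) (i : ι) :
    ∑ k ∈ range (T + 1), massLayer q T k x i = x i := by
  have hlevel : massLevel q T (x i) ∈ range (T + 1) :=
    mem_range_succ_iff.2 (Nat.findGreatest_le T)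
  simp only [massLayer, sum_ite_eq, if_pos hlevel]

lemma sum_massLayer (x : ι → ℝ) : ∑ k ∈ range (T + 1), massLayer q T k x = x := by
  ext i
  rw [Finset.sum_apply, sum_massLayer_apply]

variable [Fintype ι]

lemma sum_massLayer_le (hx : x ∈ stdSimplex ℝ ι) (k : ℕ) : ∑ i, massLayer q T k x i ≤ 1 := by
  rw [← hx.2]
  refine sum_le_sum fun i _ => ?_
  rw [massLayer]
  split_ifs
  exacts [le_rfl, hx.1 i]

lemma sum_sum_massLayer_mul (x : ι → ℝ) (A B : ℝ) :
    ∑ k ∈ range (T + 1), (∑ i, massLayer q T k x i) * (A + B * k) =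
      A * ∑ i, x i + B * meanLevel q T x := by
  have hlevel (k : ℕ) (i : ι) : massLayer q T k x i * (A + B * k) =
      massLayer q T k x i * (A + B * massLevel q T (x i)) := by
    rw [massLayer]
    split_ifs with hk
    · rw [hk]
    · simp
  simp only [sum_mul, hlevel]
  rw [sum_comm]
  simp only [← sum_mul, sum_massLayer_apply]
  simp only [meanLevel, mul_sum, ← sum_add_distrib]
  exact sum_congr rfl fun i _ => by ring

lemma sum_sum_mul_sum_massLayer_mul {κ : Type*} [Fintype κ] {μ : κ → ℝ} (hμ : μ ∈ stdSimplex ℝ κ)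
    {x : κ → ι → ℝ} (hx : ∀ j, x j ∈ stdSimplex ℝ ι) (A B : ℝ) :
    ∑ k ∈ range (T + 1), (∑ j, μ j * ∑ i, massLayer q T k (x j) i) * (A + B * k) =
      A + B * ∑ j, μ j * meanLevel q T (x j) := by
  have hassoc (k : ℕ) : (∑ j, μ j * ∑ i, massLayer q T k (x j) i) * (A + B * k) =
      ∑ j, μ j * ((∑ i, massLayer q T k (x j) i) * (A + B * k)) := by
    rw [sum_mul]
    exact sum_congr rfl fun j _ => mul_assoc _ _ _
  rw [sum_congr rfl fun k _ => hassoc k, sum_comm]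
  simp only [← mul_sum _ _ (μ _), sum_sum_massLayer_mul, (hx _).2, mul_one, sum_mul_add_mul hμ]

lemma card_massLayer_ne_zero_le (hq : 1 ≤ q) (hT : Fintype.card ι ≤ q ^ T)
    (hx : x ∈ stdSimplex ℝ ι) (k : ℕ) : #{i | massLayer q T k x i ≠ 0} ≤ q ^ (k + 1) := by
  have : 0 < q := zero_lt_one.trans_le hq
  rcases lt_or_ge k T with hk | hk
  · have hlarge (i : ι) (hi : massLayer q T k x i ≠ 0) : 1 ≤ x i * q ^ (k + 1) := by
      have hlevel : massLevel q T (x i) = k := by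
        by_contra hne
        exact hi (if_neg hne)
      exact (not_le.1 <| Nat.findGreatest_is_greatest (P := fun k => x i * q ^ k ≤ 1)
        (hlevel.trans_lt k.lt_succ_self) hk).le
    calc (#{i | massLayer q T k x i ≠ 0} : ℝ) = ∑ i with massLayer q T k x i ≠ 0, 1 := by simp
      _ ≤ ∑ i with massLayer q T k x i ≠ 0, x i * q ^ (k + 1) :=
          sum_le_sum fun i hi => hlarge i (mem_filter.1 hi).2
      _ ≤ ∑ i, x i * q ^ (k + 1) :=
          sum_le_sum_of_subset_of_nonneg (subset_univ _)
            fun i _ _ => mul_nonneg (hx.1 i) (by positivity)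
      _ = q ^ (k + 1) := by rw [← sum_mul, hx.2, one_mul]
  · calc (#{i | massLayer q T k x i ≠ 0} : ℝ) ≤ Fintype.card ι := mod_cast card_le_univ _
      _ ≤ q ^ T := hT
      _ ≤ q ^ (k + 1) := pow_le_pow_right₀ hq (by omega)

variable {f : (ι → ℝ) → ℝ} {c K : ℝ}

namespace diffBound

section Bounds

variable [Nonempty ι] (h : diffBound 2 (stdSimplex ℝ ι) f c)
  (hK : ∀ x ∈ stdSimplex ℝ ι, |f x| ≤ K) (hq : 1 ≤ q) (hT : Fintype.card ι ≤ q ^ T)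
include h hK

lemma abs_sub_sum_homogExt_massLayer_le (hx : x ∈ stdSimplex ℝ ι) :
    |f x - ∑ k ∈ range (T + 1), homogExt f (massLayer q T k x)| ≤ (T + 1) * c := by
  simpa [sum_massLayer_apply, sum_massLayer, homogExt_of_mem f hx, hx.2] using
    h.abs_homogExt_sum_sub_le hK (range (T + 1)) (massLayer_nonneg (q := q) (T := T) hx.1)

include hq hT

lemma abs_le_meanLevel [DecidableEq ι] (hf : ∀ i, f (Pi.single i 1) = 0)
    (hx : x ∈ stdSimplex ℝ ι) :
    |f x| ≤ c / 2 * (Real.logb 2 q * (meanLevel q T x + 3) + 5) + (T + 1) * (K / q + c) := by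
  have hlog (k : ℕ) : Real.logb 2 (q ^ (k + 1) * q ^ 2) = (k + 3) * Real.logb 2 q := by
    rw [← pow_add, Real.logb_pow]
    push_cast
    ring
  have hlayer (k : ℕ) : |homogExt f (massLayer q T k x)| ≤
      (∑ i, massLayer q T k x i) * (c / 2 * ((k + 3) * Real.logb 2 q + 5)) + K / q := by
    rw [← hlog]
    refine h.abs_homogExt_le_of_vertices_eq_zero hK hf (s := {i | massLayer q T k x i ≠ 0})
      (massLayer_nonneg hx.1 k) (by simp) (sum_massLayer_le hx k)
      (card_massLayer_ne_zero_le hq hT hx k) (by positivity) ?_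
    rw [← pow_add]
    exact one_le_pow₀ hq
  have hsum : ∑ k ∈ range (T + 1), |homogExt f (massLayer q T k x)| ≤
      c / 2 * (Real.logb 2 q * (meanLevel q T x + 3) + 5) + (T + 1) * (K / q) :=
    calc _ ≤ ∑ k ∈ range (T + 1), ((∑ i, massLayer q T k x i) *
            (c / 2 * (3 * Real.logb 2 q + 5) + c / 2 * Real.logb 2 q * k) + K / q) :=
          sum_le_sum fun k _ => (hlayer k).trans_eq (by ring)
      _ = _ := by
          rw [sum_add_distrib, sum_sum_massLayer_mul, hx.2, sum_const, card_range, nsmul_eq_mul]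
          push_cast
          ring
  have happrox := abs_le.1 (h.abs_sub_sum_homogExt_massLayer_le hK (q := q) (T := T) hx)
  have htri := abs_le.1 ((abs_sum_le_sum_abs _ _).trans hsum)
  rw [abs_le]
  constructor <;> linarith

variable {κ : Type*} [Fintype κ] {μ : κ → ℝ}

lemma abs_sum_mul_homogExt_massLayer_sub_le (hμ : μ ∈ stdSimplex ℝ κ) {x : κ → ι → ℝ}
    (hx : ∀ j, x j ∈ stdSimplex ℝ ι) {k : ℕ} (hk : k ≤ T) :
    |∑ j, μ j * homogExt f (massLayer q T k (x j)) -
        homogExt f (∑ j, μ j • massLayer q T k (x j))| ≤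
      (∑ j, μ j * ∑ i, massLayer q T k (x j) i) *
        (c / 2 * ((T - k + 2) * Real.logb 2 q + 5)) + K / q := by
  have hq₀ : 0 < q := by positivity
  have hpow : q ^ T * (q ^ k)⁻¹ * q ^ 2 = q ^ (T - k + 2) := by
    rw [pow_add, pow_sub₀ _ hq₀.ne' hk]
  have hlog : Real.logb 2 (q ^ T * (q ^ k)⁻¹ * q ^ 2) = (T - k + 2) * Real.logb 2 q := by
    rw [hpow, Real.logb_pow]
    push_cast [hk]
    ring
  rw [← hlog]
  refine h.abs_sum_mul_homogExt_sub_le hK (s := univ) hμ.1 hμ.2.le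
    (fun j => massLayer_nonneg (hx j).1 k) (by simp)
    (fun j => massLayer_le_inv_pow hq₀ (fun i => (mem_Icc_of_mem_stdSimplex (hx j) i).2) k)
    ?_ hT hq₀ (hpow ▸ one_le_pow₀ hq)
  rw [← hμ.2]
  exact sum_le_sum fun j _ => mul_le_of_le_one_right (hμ.1 j) (sum_massLayer_le (hx j) k)

/-- The layer of level `k` has coordinates at most `q⁻ᵏ`, so its values concentrate after
`log (q ^ (T - k))` halvings. -/
lemma sum_abs_sum_mul_homogExt_massLayer_sub_le (hμ : μ ∈ stdSimplex ℝ κ) {x : κ → ι → ℝ}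
    (hx : ∀ j, x j ∈ stdSimplex ℝ ι) :
    ∑ k ∈ range (T + 1), |∑ j, μ j * homogExt f (massLayer q T k (x j)) -
        homogExt f (∑ j, μ j • massLayer q T k (x j))| ≤
      c / 2 * (Real.logb 2 q * (T - ∑ j, μ j * meanLevel q T (x j) + 2) + 5) +
        (T + 1) * (K / q) :=
  calc _ ≤ ∑ k ∈ range (T + 1), ((∑ j, μ j * ∑ i, massLayer q T k (x j) i) *
          (c / 2 * ((T + 2) * Real.logb 2 q + 5) + -(c / 2 * Real.logb 2 q) * k) + K / q) :=
        sum_le_sum fun k hk => (h.abs_sum_mul_homogExt_massLayer_sub_le hK hq hT hμ hx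
          (mem_range_succ_iff.1 hk)).trans_eq (by ring)
    _ = _ := by
        rw [sum_add_distrib, sum_sum_mul_sum_massLayer_mul hμ hx, sum_const, card_range,
          nsmul_eq_mul]
        push_cast
        ring

lemma abs_sum_mul_sub_le_meanLevel (hμ : μ ∈ stdSimplex ℝ κ) {x : κ → ι → ℝ}
    (hx : ∀ j, x j ∈ stdSimplex ℝ ι) :
    |∑ j, μ j * f (x j) - f (∑ j, μ j • x j)| ≤
      c / 2 * (Real.logb 2 q * (T - ∑ j, μ j * meanLevel q T (x j) + 2) + 5) +
        (T + 1) * (K / q + 2 * c) := by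
  let mean (k : ℕ) : ι → ℝ := ∑ j, μ j • massLayer q T k (x j)
  have hmean_nonneg (k : ℕ) : 0 ≤ mean k :=
    sum_nonneg fun j _ => smul_nonneg (hμ.1 j) (massLayer_nonneg (hx j).1 k)
  have hmean_sum : ∑ k ∈ range (T + 1), mean k = ∑ j, μ j • x j := by
    simp only [mean]
    rw [sum_comm]
    simp only [← smul_sum, sum_massLayer]
  have hsplit : |∑ j, μ j * (f (x j) - ∑ k ∈ range (T + 1), homogExt f (massLayer q T k (x j)))| ≤
      (T + 1) * c :=
    (abs_sum_mul_le hμ.1 fun j =>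
      h.abs_sub_sum_homogExt_massLayer_le hK (q := q) (T := T) (hx j)).trans_eq (by
        rw [← sum_mul, hμ.2, one_mul])
  have hmerge := h.abs_homogExt_sum_sub_le hK (range (T + 1)) hmean_nonneg
  have hb := sum_smul_mem_stdSimplex hμ hx
  rw [hmean_sum, homogExt_of_mem f hb, hb.2, card_range] at hmerge
  have hlayers := (abs_sum_le_sum_abs _ _).trans
    (h.sum_abs_sum_mul_homogExt_massLayer_sub_le hK hq hT hμ hx)
  simp only [mul_sub, sum_sub_distrib, mul_sum] at hsplit hlayers
  rw [sum_comm] at hsplit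
  rw [abs_le] at *
  push_cast at hmerge
  constructor <;>
    linarith [hsplit.1, hsplit.2, hmerge.1, hmerge.2, hlayers.1, hlayers.2]

/-- The mean level cancels in the sum of the two bounds. -/
lemma abs_add_abs_sub_le [DecidableEq ι] (hf : ∀ i, f (Pi.single i 1) = 0)
    (hμ : μ ∈ stdSimplex ℝ κ) {x : κ → ι → ℝ} (hx : ∀ j, x j ∈ stdSimplex ℝ ι) :
    |∑ j, μ j * f (x j)| + |∑ j, μ j * f (x j) - f (∑ j, μ j • x j)| ≤
      c / 2 * (Real.logb 2 q * (T + 5) + 10) + (T + 1) * (2 * (K / q) + 3 * c) := by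
  have hvalue := abs_sum_mul_le hμ.1 fun j => h.abs_le_meanLevel hK hq hT hf (hx j)
  have hmean : ∑ j, μ j * (c / 2 * (Real.logb 2 q * (meanLevel q T (x j) + 3) + 5) +
      (T + 1) * (K / q + c)) = c / 2 * (Real.logb 2 q * (∑ j, μ j * meanLevel q T (x j) + 3) + 5) +
      (T + 1) * (K / q + c) :=
    calc _ = ∑ j, μ j * (c / 2 * (3 * Real.logb 2 q + 5) + (T + 1) * (K / q + c) +
            c / 2 * Real.logb 2 q * meanLevel q T (x j)) := sum_congr rfl fun j _ => by ring
      _ = _ := by rw [sum_mul_add_mul hμ]; ring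
  have hmix := h.abs_sum_mul_sub_le_meanLevel hK hq hT hμ hx
  linarith

lemma sum_mul_sub_sum_mul_le_of_pow [DecidableEq ι] (hf : ∀ i, f (Pi.single i 1) = 0)
    {ν : κ → ℝ} (hμ : μ ∈ stdSimplex ℝ κ) (hν : ν ∈ stdSimplex ℝ κ) {x : κ → ι → ℝ}
    (hx : ∀ j, x j ∈ stdSimplex ℝ ι) (hμν : ∑ j, μ j • x j = ∑ j, ν j • x j) :
    ∑ j, μ j * f (x j) - ∑ j, ν j * f (x j) ≤
      c / 2 * (Real.logb 2 q * (T + 5) + 10) + (T + 1) * (2 * (K / q) + 3 * c) := by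
  have hupper := h.abs_add_abs_sub_le hK hq hT hf hμ hx
  have hlower := h.abs_add_abs_sub_le hK hq hT hf hν hx
  rw [hμν] at hupper
  linarith [le_abs_self (∑ j, μ j * f (x j)), neg_le_abs (∑ j, ν j * f (x j)),
    le_abs_self (∑ j, μ j * f (x j) - f (∑ j, ν j • x j)),
    neg_le_abs (∑ j, ν j * f (x j) - f (∑ j, ν j • x j))]

omit hq hT

/-- With `q ^ T = card ι` the width `logb 2 q` of a level is only the fraction `1 / T` of the
leading term, while dividing by `q` still absorbs the logarithmic bound on `f`. -/
lemma sum_mul_sub_sum_mul_le [DecidableEq ι] (hf : ∀ i, f (Pi.single i 1) = 0) (hT₀ : T ≠ 0)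
    {ν : κ → ℝ} (hμ : μ ∈ stdSimplex ℝ κ) (hν : ν ∈ stdSimplex ℝ κ) {x : κ → ι → ℝ}
    (hx : ∀ j, x j ∈ stdSimplex ℝ ι) (hμν : ∑ j, μ j • x j = ∑ j, ν j • x j) :
    ∑ j, μ j * f (x j) - ∑ j, ν j * f (x j) ≤
      c / 2 * (Real.logb 2 (Fintype.card ι) * (1 + 5 / T)) + c * (5 + (T + 1) * (4 * T + 17)) := by
  have hc : 0 ≤ c := h.nonneg (single_mem_stdSimplex ℝ (Classical.arbitrary ι))
  have hcard : (1 : ℝ) ≤ Fintype.card ι := mod_cast Fintype.card_pos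
  set q : ℝ := (Fintype.card ι : ℝ) ^ (T⁻¹ : ℝ)
  have hq : 1 ≤ q := Real.one_le_rpow hcard (by positivity)
  have hqT : q ^ T = Fintype.card ι := Real.rpow_inv_natCast_pow (by positivity) hT₀
  have hlogT : Real.logb 2 (Fintype.card ι) = T * Real.logb 2 q := by rw [← hqT, Real.logb_pow]
  have hlogq : Real.logb 2 q ≤ 2 * q := by
    rw [Real.logb, div_le_iff₀ (Real.log_pos one_lt_two)]
    nlinarith [Real.log_le_self (zero_le_one.trans hq), Real.log_two_gt_d9]
  have hKq : c * (Real.logb 2 (Fintype.card ι) + 7) / q ≤ c * (2 * T + 7) := by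
    rw [mul_div_assoc, hlogT]
    gcongr
    rw [div_le_iff₀ (by positivity)]
    nlinarith [mul_le_mul_of_nonneg_left hlogq T.cast_nonneg]
  have hgap := h.sum_mul_sub_sum_mul_le_of_pow
    (fun x hx => h.abs_le_of_vertices_eq_zero hK hf hx) hq hqT.ge hf hμ hν hx hμν
  refine hgap.trans ?_
  calc _ ≤ c / 2 * (Real.logb 2 q * (T + 5) + 10) + (T + 1) * (2 * (c * (2 * T + 7)) + 3 * c) := by
        gcongr
    _ = _ := by
        rw [hlogT]
        have : (T : ℝ) ≠ 0 := mod_cast hT₀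
        field_simp
        ring

end Bounds

end diffBound

end Layers

section Duality

section Separation

variable {κ V : Type*} [Fintype κ] [AddCommGroup V] [Module ℝ V] [TopologicalSpace V]
  [IsTopologicalAddGroup V] [ContinuousSMul ℝ V] [LocallyConvexSpace ℝ V] [T2Space V]
  {x : κ → V} {r : κ → ℝ} {R : ℝ}
  (h : ∀ μ ∈ stdSimplex ℝ κ, ∀ ν ∈ stdSimplex ℝ κ, ∑ j, μ j • x j = ∑ j, ν j • x j →
    ∑ j, μ j * r j - ∑ j, ν j * r j < 2 * R)

include h

lemma exists_strongDual_separating_shifts :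
    ∃ (g : StrongDual ℝ (V × ℝ)) (u : ℝ), ∀ j, g (x j, r j - R) < u ∧ u < g (x j, r j + R) := by
  classical
  let hull (t : ℝ) : Set (V × ℝ) :=
    Fintype.linearCombination ℝ (fun j => (x j, r j + t)) '' stdSimplex ℝ κ
  have hconvex (t : ℝ) : Convex ℝ (hull t) := (convex_stdSimplex ℝ κ).linear_image _
  have hcompact (t : ℝ) : IsCompact (hull t) :=
    (isCompact_stdSimplex ℝ κ).image (LinearMap.continuous_of_finiteDimensional _)
  have hmem (t : ℝ) (j : κ) : (x j, r j + t) ∈ hull t :=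
    ⟨_, single_mem_stdSimplex ℝ j, by simp [Fintype.linearCombination_apply_single]⟩
  have hdisjoint : Disjoint (hull (-R)) (hull R) := by
    rw [Set.disjoint_left]
    rintro _ ⟨μ, hμ, rfl⟩ ⟨ν, hν, hνμ⟩
    simp only [Fintype.linearCombination_apply, Prod.ext_iff, Prod.fst_sum, Prod.snd_sum,
      Prod.smul_fst, Prod.smul_snd, smul_eq_mul, mul_add, sum_add_distrib, ← sum_mul, hμ.2, hν.2,
      one_mul] at hνμ
    linarith [h μ hμ ν hν hνμ.1.symm, hνμ.2]
  obtain ⟨g, u, v, hgu, huv, hgv⟩ := geometric_hahn_banach_compact_closed (hconvex (-R))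
    (hcompact (-R)) (hconvex R) (hcompact R).isClosed hdisjoint
  exact ⟨g, u, fun j => ⟨hgu _ (hmem (-R) j), huv.trans (hgv _ (hmem R j))⟩⟩

/-- The affine function is the one whose graph is the hyperplane separating the points
`(x j, r j - R)` from the points `(x j, r j + R)`. -/
lemma exists_strongDual_abs_sub_add_le :
    ∃ (φ : StrongDual ℝ V) (b : ℝ), ∀ j, |r j - (φ (x j) + b)| ≤ R := by
  classical
  cases isEmpty_or_nonempty κ with
  | inl _ => exact ⟨0, 0, isEmptyElim⟩
  | inr _ =>
  obtain ⟨g, u, hgu⟩ := exists_strongDual_separating_shifts h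
  have hg (y : V) (t : ℝ) : g (y, t) = g (y, 0) + t * g (0, 1) := by
    rw [← smul_eq_mul, ← map_smul, ← map_add]
    simp
  have hlower (j : κ) : g (x j, 0) + (r j - R) * g (0, 1) < u := hg _ (r j - R) ▸ (hgu j).1
  have hupper (j : κ) : u < g (x j, 0) + (r j + R) * g (0, 1) := hg _ (r j + R) ▸ (hgu j).2
  have hR : 0 < R := by
    have hvertex := single_mem_stdSimplex ℝ (Classical.arbitrary κ)
    linarith [h _ hvertex _ hvertex rfl]
  have hslope : 0 < g (0, 1) := by
    nlinarith [hlower (Classical.arbitrary κ), hupper (Classical.arbitrary κ)]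
  refine ⟨-((g (0, 1))⁻¹ • g.comp (.inl ℝ V ℝ)), u / g (0, 1), fun j => ?_⟩
  have hvalue : (-((g (0, 1))⁻¹ • g.comp (.inl ℝ V ℝ))) (x j) + u / g (0, 1) =
      (u - g (x j, 0)) / g (0, 1) := by
    simp
    ring
  rw [hvalue, abs_sub_comm, abs_sub_le_iff, sub_le_iff_le_add, sub_le_comm, div_le_iff₀ hslope,
    le_div_iff₀ hslope]
  constructor <;> linarith [hlower j, hupper j]

end Separation

/-- The finitely many constraints handled by separation are extended to the whole simplex by
compactness: the constraints at the vertices confine `a` to a cube. -/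
lemma exists_forall_abs_sub_sum_mul_le {ι : Type*} [Fintype ι] {f : (ι → ℝ) → ℝ} {R : ℝ}
    (h : ∀ t : Finset (ι → ℝ), ↑t ⊆ stdSimplex ℝ ι → ∀ μ ∈ stdSimplex ℝ t, ∀ ν ∈ stdSimplex ℝ t,
      ∑ x, μ x • (x : ι → ℝ) = ∑ x, ν x • (x : ι → ℝ) →
        ∑ x, μ x * f x - ∑ x, ν x * f x < 2 * R) :
    ∃ a : ι → ℝ, ∀ x ∈ stdSimplex ℝ ι, |f x - ∑ i, a i * x i| ≤ R := by
  classical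
  let box : Set (ι → ℝ) := Set.univ.pi fun i => Metric.closedBall (f (Pi.single i 1)) R
  let good (x : stdSimplex ℝ ι) : Set (ι → ℝ) := {a | |f x - ∑ i, a i * x.1 i| ≤ R}
  have hbox : IsCompact box := isCompact_univ_pi fun i => isCompact_closedBall _ _
  have hgood (x : stdSimplex ℝ ι) : IsClosed (good x) :=
    isClosed_le (by fun_prop) continuous_const
  obtain ⟨a, -, ha⟩ := hbox.inter_iInter_nonempty good hgood fun t => by
    let t' : Finset (ι → ℝ) := t.image Subtype.val ∪ univ.image (Pi.single · 1)
    have ht' : ↑t' ⊆ stdSimplex ℝ ι := by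
      intro x hx
      simp only [t', coe_union, coe_image, Set.mem_union, Set.mem_image] at hx
      rcases hx with ⟨y, -, rfl⟩ | ⟨i, -, rfl⟩
      exacts [y.2, single_mem_stdSimplex ℝ i]
    obtain ⟨φ, b, hφ⟩ :=
      exists_strongDual_abs_sub_add_le (x := fun x : t' => (x : ι → ℝ)) (h t' ht')
    have haffine {x : ι → ℝ} (hx : x ∈ stdSimplex ℝ ι) :
        ∑ i, (φ (Pi.single i 1) + b) * x i = φ x + b := by
      conv_rhs => rw [pi_eq_sum_univ' x, map_sum]
      simp only [map_smul, smul_eq_mul, add_mul, sum_add_distrib, ← mul_sum, hx.2, mul_one]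
      simp only [mul_comm]
    refine ⟨fun i => φ (Pi.single i 1) + b, fun i _ => ?_, Set.mem_iInter₂.2 fun x hx => ?_⟩
    · rw [Metric.mem_closedBall, dist_comm, Real.dist_eq]
      simpa using hφ ⟨_, mem_union_right _ (mem_image_of_mem _ (mem_univ i))⟩
    · change |_| ≤ R
      rw [haffine x.2]
      exact hφ ⟨x, mem_union_left _ (mem_image_of_mem _ hx)⟩
  exact ⟨a, fun x hx => Set.mem_iInter.1 ha ⟨x, hx⟩⟩

end Duality

section Approximation

variable {ι : Type*} [Fintype ι] [Nonempty ι] {f : (ι → ℝ) → ℝ}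

namespace diffBound

variable {c K R : ℝ} {T : ℕ} (h : diffBound 2 (stdSimplex ℝ ι) f c)
  (hK : ∀ x ∈ stdSimplex ℝ ι, |f x| ≤ K) (hT : T ≠ 0)
  (hR : c / 4 * (Real.logb 2 (Fintype.card ι) * (1 + 5 / T)) +
    c / 2 * (5 + (T + 1) * (4 * T + 17)) < R)
include h hK hT hR

lemma exists_abs_sub_sum_mul_le_of_vertices_eq_zero [DecidableEq ι]
    (hf : ∀ i, f (Pi.single i 1) = 0) :
    ∃ a : ι → ℝ, ∀ x ∈ stdSimplex ℝ ι, |f x - ∑ i, a i * x i| ≤ R := by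
  refine exists_forall_abs_sub_sum_mul_le fun t ht μ hμ ν hν hμν => ?_
  linarith [h.sum_mul_sub_sum_mul_le hK hf hT hμ hν (fun x => ht x.2) hμν]

lemma exists_abs_sub_sum_mul_le :
    ∃ a : ι → ℝ, ∀ x ∈ stdSimplex ℝ ι, |f x - ∑ i, a i * x i| ≤ R := by
  classical
  let φ : (ι → ℝ) →ₗ[ℝ] ℝ := Fintype.linearCombination ℝ fun i => f (Pi.single i 1)
  have hφ (x : ι → ℝ) : φ x = ∑ i, x i * f (Pi.single i 1) := rfl
  have hbound : ∀ x ∈ stdSimplex ℝ ι, |f x - φ x| ≤ K + K := fun x hx => by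
    refine (abs_sub _ _).trans (add_le_add (hK x hx) ?_)
    have hφx := abs_sum_mul_le hx.1 fun i => hK _ (single_mem_stdSimplex ℝ i)
    rwa [← sum_mul, hx.2, one_mul] at hφx
  have hvertices (i : ι) : f (Pi.single i 1) - φ (Pi.single i 1) = 0 := by
    simp [hφ, Pi.single_apply]
  obtain ⟨a, ha⟩ := (h.sub_linearMap φ).exists_abs_sub_sum_mul_le_of_vertices_eq_zero hbound hT hR
    hvertices
  refine ⟨fun i => f (Pi.single i 1) + a i, fun x hx => ?_⟩
  convert ha x hx using 2
  simp only [hφ, add_mul, sum_add_distrib, mul_comm (f _)]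
  ring

end diffBound

end Approximation

theorem simplex_whitney_upper_bound_general {ε : ℝ} (hε : 0 < ε) :
    ∃ C : ℝ, ∀ (ι : Type*) [Fintype ι] [Nonempty ι] (f : (ι → ℝ) → ℝ),
      Bornology.IsBounded (f '' stdSimplex ℝ ι) → diffBound 2 (stdSimplex ℝ ι) f (1 - ε) →
      ∃ a : ι → ℝ, ∀ u ∈ stdSimplex ℝ ι,
        |f u - ∑ i, a i * u i| ≤ C + 1 / 4 * Real.logb 2 (Fintype.card ι) := by
  classical
  set T := ⌈5 / ε⌉₊
  have hT : 5 / ε ≤ T := Nat.le_ceil _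
  have hT₀ : (0 : ℝ) < T := (div_pos (by norm_num) hε).trans_le hT
  refine ⟨3 + (T + 1) * (2 * T + 9), fun ι _ _ f hf h => ?_⟩
  obtain ⟨K, hK⟩ := isBounded_iff_forall_norm_le.1 hf
  refine h.exists_abs_sub_sum_mul_le (Set.forall_mem_image.1 hK) (Nat.cast_pos.1 hT₀).ne' ?_
  have hc : 0 ≤ 1 - ε := h.nonneg (single_mem_stdSimplex ℝ (Classical.arbitrary ι))
  have hlog : 0 ≤ Real.logb 2 (Fintype.card ι) :=
    Real.logb_nonneg one_lt_two (mod_cast Fintype.card_pos)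
  have hleading : (1 - ε) * (1 + 5 / T) ≤ 1 := by
    have : 5 / T ≤ ε := (div_le_comm₀ hε hT₀).1 hT
    nlinarith
  nlinarith [mul_le_mul_of_nonneg_right hleading hlog,
    mul_nonneg hε.le (by positivity : (0 : ℝ) ≤ 5 + (T + 1) * (4 * T + 17))]

/-- Upper bound in Theorem 3.7: for every `ε ∈ (0,1/2)` there is `C = C(ε)` such that every
continuous `f` on the simplex `Sⁿ` with `ω₂(f;Sⁿ) ≤ 1 − ε` is within `C + (1/4)log₂(n+1)`
of an affine function. -/
theorem simplex_whitney_upper_bound :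
    ∀ ε : ℝ, 0 < ε → ε < 1 / 2 → ∃ C : ℝ,
      ∀ n : ℕ, 1 ≤ n → ∀ f : (Fin (n + 1) → ℝ) → ℝ,
        ContinuousOn f (stdSimplex ℝ (Fin (n + 1))) →
        diffBound 2 (stdSimplex ℝ (Fin (n + 1))) f (1 - ε) →
        ∃ (c : ℝ) (a : Fin (n + 1) → ℝ), ∀ u ∈ stdSimplex ℝ (Fin (n + 1)),
          |f u - (c + ∑ i, a i * u i)| ≤ C + (1 / 4) * Real.logb 2 (n + 1) := by
  intro ε hε _
  obtain ⟨C, hC⟩ := simplex_whitney_upper_bound_general hε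
  refine ⟨C, fun n _ f hf h => ?_⟩
  obtain ⟨a, ha⟩ :=
    hC _ f ((isCompact_stdSimplex ℝ _).image_of_continuousOn hf).isBounded h
  exact ⟨0, a, by simpa using ha⟩
end

section
/- For every ε ∈ (0,1/2) there is a constant C = C(ε) such that: for every n ≥ 0 and every continuous f : Sⁿ → ℝ with ω₂(f;Sⁿ) ≤ 1 − ε there exists a lattice norm N on ℝ^{n+1} such that |f(u) − (1/2)(Φ_N(u) − Φ_{N*}(u))| ≤ C for all u ∈ Sⁿ, where N* denotes the dual norm of N and Φ_N, Φ_{N*} the indicator functions of N and N*. (Theorem 2.9.) -/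
open Finset

/-- A lattice norm on `ι → ℝ`: a norm which is monotone with respect to
coordinatewise absolute value. -/
def IsLatticeNorm {ι : Type*} [Fintype ι] (N : (ι → ℝ) → ℝ) : Prop :=
  (∀ x, 0 ≤ N x) ∧ (∀ x, N x = 0 ↔ x = 0) ∧ (∀ (a : ℝ) (x), N (a • x) = |a| * N x) ∧
  (∀ x y, N (x + y) ≤ N x + N y) ∧ (∀ x y, (∀ i, |x i| ≤ |y i|) → N x ≤ N y)

/-- The dual norm `N*(y) = sup{∑ xᵢ yᵢ : N(x) ≤ 1}`. -/
noncomputable def dualNorm {ι : Type*} [Fintype ι] (N : (ι → ℝ) → ℝ) : (ι → ℝ) → ℝ :=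
  fun y => sSup {v : ℝ | ∃ x, N x ≤ 1 ∧ v = ∑ i, x i * y i}

/-- The indicator (entropy) function of a lattice norm:
`Φ_N(u) = sup{∑ uᵢ log₂|xᵢ| : N(x) ≤ 1, xᵢ ≠ 0}`. -/
noncomputable def latticeIndicator {ι : Type*} [Fintype ι] (N : (ι → ℝ) → ℝ) : (ι → ℝ) → ℝ :=
  fun u => sSup {v : ℝ | ∃ x, N x ≤ 1 ∧ (∀ i, x i ≠ 0) ∧ v = ∑ i, u i * Real.logb 2 |x i|}

/-!
A second difference bound `θ < 1` makes the homogeneous extension `F` of `f` almost additive on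
pairs of vectors of equal mass. The point is to bound the Jensen gap of `±F` by half the entropy
production plus a constant depending only on `θ`. Splitting each vector of a family against all
the others replaces the family by pairwise midpoints: this costs at most `θ / 2`, and it produces at
least `log 2 - binEntropy δ` of entropy as long as the family overlaps in less than a fraction `δ`
of its mass. If the overlap is larger, the common part can be removed, and what remains has mass
smaller by a factor `1 - 2δ`. So the additive constant `K` in the bound may be replaced by a
contraction of `K`, and a bound that holds with some finite constant holds with a universal one.

Hence `±f - entropy / (2 log 2)` are approximately convex, and by Hahn–Banach they are close to
suprema of affine functions. The vectors `2 ^ b`, with `b` an affine minorant of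
`-f - entropy / (2 log 2)`, generate the dual unit ball of a lattice norm `N`; by the Gibbs
variational principle `Φ_N + Φ_{N*} ≤ -entropy / log 2`, which turns the two lower bounds on `Φ_N`
and `Φ_{N*}` into two-sided ones.
-/

namespace SimplexRepresentation

theorem div_one_sub_mem_of_contracting {T : Set ℝ} {B ρ : ℝ} (hclosed : IsClosed T)
    (hupper : IsUpperSet T) (hne : T.Nonempty) (hB : 0 ≤ B) (hρ : 0 ≤ ρ) (hρ1 : ρ < 1)
    (hstep : ∀ K ∈ T, 0 ≤ K → B + ρ * K ∈ T) : B / (1 - ρ) ∈ T := by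
  have hbdd : BddBelow (T ∩ Set.Ici 0) := bddBelow_Ici.mono Set.inter_subset_right
  have hmem : sInf (T ∩ Set.Ici 0) ∈ T ∩ Set.Ici 0 := by
    obtain ⟨K, hK⟩ := hne
    exact (hclosed.inter isClosed_Ici).csInf_mem
      ⟨max K 0, hupper (le_max_left K 0) hK, le_max_right K 0⟩ hbdd
  obtain ⟨hT, h0⟩ := hmem
  have hle := csInf_le hbdd ⟨hstep _ hT h0, add_nonneg hB (mul_nonneg hρ h0)⟩
  refine hupper ?_ hT
  rw [le_div_iff₀ (sub_pos.2 hρ1)]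
  linarith

section Gap

variable {E : Type*} {J : Type*} [Fintype J]

/-- The additivity defect of `Φ` at a pair of points. -/
def defect [Add E] (Φ : E → ℝ) (x y : E) : ℝ := Φ (x + y) - Φ x - Φ y

/-- The additivity defect of `Φ` on a finite family; for `x j = w j • v j` with `Φ` positively
homogeneous this is the Jensen deficit of `Φ`. -/
def gap [AddCommMonoid E] (Φ : E → ℝ) (x : J → E) : ℝ := Φ (∑ j, x j) - ∑ j, Φ (x j)

/-- Positive homogeneity of degree one on the positive cone. -/
def PosHomogeneous [Zero E] [Preorder E] [SMul ℝ E] (Φ : E → ℝ) : Prop :=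
  ∀ ⦃a : ℝ⦄, 0 ≤ a → ∀ ⦃x : E⦄, 0 ≤ x → Φ (a • x) = a * Φ x

theorem defect_comm [AddCommMonoid E] (Φ : E → ℝ) (x y : E) : defect Φ x y = defect Φ y x := by
  rw [defect, defect, add_comm x y, sub_right_comm]

theorem gap_neg [AddCommMonoid E] (Φ : E → ℝ) (x : J → E) :
    gap (fun v => -Φ v) x = -gap Φ x := by
  simp only [gap, sum_neg_distrib]
  ring

theorem gap_add_family [AddCommMonoid E] (Φ : E → ℝ) (x y : J → E) :
    gap Φ (fun j => x j + y j) = gap Φ x + gap Φ y + defect Φ (∑ j, x j) (∑ j, y j)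
      - ∑ j, defect Φ (x j) (y j) := by
  simp only [gap, defect, sum_add_distrib, sum_sub_distrib]
  ring

variable [AddCommMonoid E] [PartialOrder E] [Module ℝ E] {Φ : E → ℝ}

theorem PosHomogeneous.neg (hΦ : PosHomogeneous Φ) : PosHomogeneous (fun v => -Φ v) :=
  fun _ ha _ hx => (congrArg Neg.neg (hΦ ha hx)).trans (mul_neg _ _).symm

theorem PosHomogeneous.gap_smul_const (hΦ : PosHomogeneous Φ) {t : J → ℝ} (ht : ∀ j, 0 ≤ t j)
    {u : E} (hu : 0 ≤ u) : gap Φ (fun j => t j • u) = 0 := by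
  rw [gap, ← sum_smul, hΦ (sum_nonneg fun j _ => ht j) hu, sum_mul, sub_eq_zero]
  exact sum_congr rfl fun j _ => (hΦ (ht j) hu).symm

theorem PosHomogeneous.gap_smul [IsOrderedAddMonoid E] (hΦ : PosHomogeneous Φ) {a : ℝ}
    (ha : 0 ≤ a) {x : J → E} (hx : ∀ j, 0 ≤ x j) :
    gap Φ (fun j => a • x j) = a * gap Φ x := by
  simp only [gap, ← smul_sum, hΦ ha (sum_nonneg fun j _ => hx j), hΦ ha (hx _), ← mul_sum, mul_sub]

end Gap

section Mass

variable {ι : Type*} [Fintype ι]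

/-- The total mass `∑ i, x i`, as a linear functional. -/
noncomputable def mass : (ι → ℝ) →ₗ[ℝ] ℝ := ∑ i, LinearMap.proj i

theorem mass_apply (x : ι → ℝ) : mass x = ∑ i, x i := by simp [mass]

theorem mass_nonneg {x : ι → ℝ} (hx : 0 ≤ x) : 0 ≤ mass x := by
  rw [mass_apply]
  exact sum_nonneg fun i _ => hx i

theorem mass_mono {x y : ι → ℝ} (h : x ≤ y) : mass x ≤ mass y := by
  rw [mass_apply, mass_apply]
  exact sum_le_sum fun i _ => h i

theorem eq_zero_of_mass_eq_zero {x : ι → ℝ} (hx : 0 ≤ x) (h : mass x = 0) : x = 0 := by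
  rw [mass_apply, sum_eq_zero_iff_of_nonneg fun i _ => hx i] at h
  exact funext fun i => h i (mem_univ i)

theorem mem_stdSimplex_iff_mass {x : ι → ℝ} : x ∈ stdSimplex ℝ ι ↔ 0 ≤ x ∧ mass x = 1 := by
  rw [mass_apply]
  rfl

end Mass

section Mixing

variable {ι J : Type*} [Fintype ι] {x : J → ι → ℝ}

/-- The contribution of `x p.1` to the member indexed by the pair `p` of the mixed family. -/
noncomputable def halfMix (x : J → ι → ℝ) (p : J × J) : ι → ℝ := (mass (x p.2) / 2) • x p.1

/-- The mixed family: when the masses of `x` sum to one, each `x j` is cut into pieces proportional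
to the masses of the other members, and the two pieces belonging to a pair are merged. -/
noncomputable def mix (x : J → ι → ℝ) (p : J × J) : ι → ℝ := halfMix x p + halfMix x p.swap

theorem halfMix_nonneg (hx : ∀ j, 0 ≤ x j) (p : J × J) : 0 ≤ halfMix x p :=
  smul_nonneg (div_nonneg (mass_nonneg (hx _)) zero_le_two) (hx _)

theorem mix_nonneg (hx : ∀ j, 0 ≤ x j) (p : J × J) : 0 ≤ mix x p :=
  add_nonneg (halfMix_nonneg hx p) (halfMix_nonneg hx p.swap)

theorem mass_halfMix_swap (x : J → ι → ℝ) (p : J × J) :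
    mass (halfMix x p.swap) = mass (halfMix x p) := by
  simp only [halfMix, map_smul, smul_eq_mul, Prod.fst_swap, Prod.snd_swap]
  ring

variable [Fintype J]

/-- The mass shared by the two halves of `mix`. -/
noncomputable def overlap (x : J → ι → ℝ) : ℝ := ∑ p, mass (halfMix x p ⊓ halfMix x p.swap)

theorem sum_prod_swap {M : Type*} [AddCommMonoid M] (g : J × J → M) :
    ∑ p : J × J, g p.swap = ∑ p, g p :=
  (Equiv.prodComm J J).sum_comp g

theorem PosHomogeneous.sum_halfMix {Φ : (ι → ℝ) → ℝ} (hΦ : PosHomogeneous Φ)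
    (hx : ∀ j, 0 ≤ x j) (h1 : ∑ j, mass (x j) = 1) :
    ∑ p, Φ (halfMix x p) = (∑ j, Φ (x j)) / 2 := by
  have hterm (p : J × J) : Φ (halfMix x p) = Φ (x p.1) / 2 * mass (x p.2) := by
    rw [halfMix, hΦ (div_nonneg (mass_nonneg (hx _)) zero_le_two) (hx _)]
    ring
  rw [sum_congr rfl fun p _ => hterm p, Fintype.sum_prod_type]
  simp only [← mul_sum, h1, mul_one, ← sum_div]

theorem sum_mass_halfMix (hx : ∀ j, 0 ≤ x j) (h1 : ∑ j, mass (x j) = 1) :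
    ∑ p, mass (halfMix x p) = 1 / 2 := by
  rw [PosHomogeneous.sum_halfMix (fun a _ y _ => map_smul mass a y) hx h1, h1]

theorem sum_mix (h1 : ∑ j, mass (x j) = 1) : ∑ p, mix x p = ∑ j, x j := by
  simp only [mix, sum_add_distrib, sum_prod_swap]
  rw [Fintype.sum_prod_type]
  simp only [halfMix, ← sum_smul, ← sum_div, h1]
  rw [← smul_sum, ← add_smul, add_halves, one_smul]

theorem sum_mass_mix (h1 : ∑ j, mass (x j) = 1) : ∑ p, mass (mix x p) = 1 := by
  rw [← map_sum, sum_mix h1, map_sum, h1]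

theorem PosHomogeneous.gap_eq_gap_mix_add {Φ : (ι → ℝ) → ℝ} (hΦ : PosHomogeneous Φ)
    (hx : ∀ j, 0 ≤ x j) (h1 : ∑ j, mass (x j) = 1) :
    gap Φ x = gap Φ (mix x) + ∑ p, defect Φ (halfMix x p) (halfMix x p.swap) := by
  have hsplit : ∑ p, Φ (mix x p)
      = ∑ j, Φ (x j) + ∑ p, defect Φ (halfMix x p) (halfMix x p.swap) := by
    simp only [defect, sum_sub_distrib, sum_prod_swap fun p => Φ (halfMix x p),
      hΦ.sum_halfMix hx h1, mix]
    ring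
  rw [gap, gap, sum_mix h1, hsplit]
  ring

theorem overlap_nonneg (hx : ∀ j, 0 ≤ x j) : 0 ≤ overlap x :=
  sum_nonneg fun p _ => mass_nonneg (le_inf (halfMix_nonneg hx p) (halfMix_nonneg hx p.swap))

end Mixing

section Peeling

variable {ι J : Type*} [Fintype ι] [Fintype J] {x : J → ι → ℝ}

/-- The part of `x j` lying below a multiple of `∑ k, x k`, the one with the same mass as `x j` when
the masses of `x` sum to one. -/
noncomputable def core (x : J → ι → ℝ) (j : J) : ι → ℝ := (mass (x j) • ∑ k, x k) ⊓ x j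

/-- What `core x j` lacks to be proportional to `∑ k, x k`. -/
noncomputable def shortfall (x : J → ι → ℝ) (j : J) : ι → ℝ := mass (x j) • (∑ k, x k) - core x j

/-- What `core x j` lacks to be `x j`. -/
noncomputable def excess (x : J → ι → ℝ) (j : J) : ι → ℝ := x j - core x j

theorem core_add_shortfall (x : J → ι → ℝ) (j : J) :
    core x j + shortfall x j = mass (x j) • ∑ k, x k := add_sub_cancel _ _

theorem core_add_excess (x : J → ι → ℝ) (j : J) : core x j + excess x j = x j :=
  add_sub_cancel _ _

theorem core_nonneg (hx : ∀ j, 0 ≤ x j) (j : J) : 0 ≤ core x j :=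
  le_inf (smul_nonneg (mass_nonneg (hx j)) (sum_nonneg fun k _ => hx k)) (hx j)

theorem shortfall_nonneg (x : J → ι → ℝ) (j : J) : 0 ≤ shortfall x j := sub_nonneg.2 inf_le_left

theorem excess_nonneg (x : J → ι → ℝ) (j : J) : 0 ≤ excess x j := sub_nonneg.2 inf_le_right

theorem sum_mass_smul_sum (h1 : ∑ j, mass (x j) = 1) :
    ∑ j, mass (x j) • ∑ k, x k = ∑ k, x k := by
  rw [← sum_smul, h1, one_smul]

theorem sum_shortfall (h1 : ∑ j, mass (x j) = 1) : ∑ j, shortfall x j = ∑ j, excess x j := by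
  simp only [shortfall, excess, sum_sub_distrib, sum_mass_smul_sum h1]

theorem mass_shortfall (h1 : ∑ j, mass (x j) = 1) (j : J) :
    mass (shortfall x j) = mass (excess x j) := by
  simp only [shortfall, excess, map_sub, map_smul, map_sum, h1, smul_eq_mul, mul_one]

theorem PosHomogeneous.gap_eq_gap_excess_sub {Φ : (ι → ℝ) → ℝ} (hΦ : PosHomogeneous Φ)
    (hx : ∀ j, 0 ≤ x j) (h1 : ∑ j, mass (x j) = 1) :
    gap Φ x = gap Φ (excess x) - gap Φ (shortfall x)
      + ∑ j, defect Φ (core x j) (shortfall x j) - ∑ j, defect Φ (core x j) (excess x j) := by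
  have hex := gap_add_family Φ (core x) (excess x)
  have hsh := gap_add_family Φ (core x) (shortfall x)
  simp only [core_add_excess] at hex
  simp only [core_add_shortfall, sum_shortfall h1,
    hΦ.gap_smul_const (fun j => mass_nonneg (hx j)) (sum_nonneg fun k _ => hx k)] at hsh
  linarith

theorem sum_halfMix_inf_le_core (h1 : ∑ j, mass (x j) = 1) (j : J) :
    ∑ k, halfMix x (j, k) ⊓ halfMix x (k, j) ≤ (2⁻¹ : ℝ) • core x j := by
  have hrow : ∑ k, halfMix x (j, k) = (2⁻¹ : ℝ) • x j := by
    simp only [halfMix, ← sum_smul, ← sum_div, h1, one_div]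
  have hcol : ∑ k, halfMix x (k, j) = (2⁻¹ : ℝ) • mass (x j) • ∑ k, x k := by
    simp only [halfMix, ← smul_sum, smul_smul, div_eq_inv_mul]
  have hle_row : ∑ k, halfMix x (j, k) ⊓ halfMix x (k, j) ≤ (2⁻¹ : ℝ) • x j :=
    (sum_le_sum fun _ _ => inf_le_left).trans_eq hrow
  have hle_col : ∑ k, halfMix x (j, k) ⊓ halfMix x (k, j) ≤ (2⁻¹ : ℝ) • mass (x j) • ∑ k, x k :=
    (sum_le_sum fun _ _ => inf_le_right).trans_eq hcol
  rw [le_inv_smul_iff_of_pos two_pos] at hle_row hle_col ⊢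
  exact le_inf hle_col hle_row

theorem sum_mass_excess_le (h1 : ∑ j, mass (x j) = 1) :
    ∑ j, mass (excess x j) ≤ 1 - 2 * overlap x := by
  have hcore : overlap x ≤ 2⁻¹ * ∑ j, mass (core x j) := by
    rw [overlap, Fintype.sum_prod_type, mul_sum]
    refine sum_le_sum fun j _ => ?_
    rw [← map_sum, ← smul_eq_mul, ← map_smul]
    exact mass_mono (sum_halfMix_inf_le_core h1 j)
  simp only [excess, map_sub, sum_sub_distrib, h1]
  linarith

end Peeling

section PairEntropy

open Real

/-- The entropy `(a + b) * binEntropy (a / (a + b))` released when masses `a` and `b` are merged. -/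
noncomputable def pairEntropy (a b : ℝ) : ℝ := negMulLog a + negMulLog b - negMulLog (a + b)

theorem pairEntropy_comm (a b : ℝ) : pairEntropy a b = pairEntropy b a := by
  rw [pairEntropy, pairEntropy, add_comm a b, add_comm (negMulLog a)]

theorem pairEntropy_mul_mul (t a b : ℝ) : pairEntropy (t * a) (t * b) = t * pairEntropy a b := by
  simp only [pairEntropy, ← mul_add, negMulLog_mul]
  ring

theorem pairEntropy_one_sub (p : ℝ) : pairEntropy p (1 - p) = binEntropy p := by
  rw [pairEntropy, add_sub_cancel, negMulLog_one, sub_zero,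
    binEntropy_eq_negMulLog_add_negMulLog_one_sub]

theorem pairEntropy_eq_mul_binEntropy (a b : ℝ) :
    pairEntropy a b = (a + b) * binEntropy (a / (a + b)) := by
  rcases eq_or_ne (a + b) 0 with h | h
  · rw [h, zero_mul, eq_neg_of_add_eq_zero_right h]
    simp [pairEntropy, negMulLog]
  have hcompl : 1 - a / (a + b) = b / (a + b) := by rw [one_sub_div h, add_sub_cancel_left]
  rw [← pairEntropy_one_sub, ← pairEntropy_mul_mul, hcompl, mul_div_cancel₀ _ h,
    mul_div_cancel₀ _ h]

theorem pairEntropy_self (a : ℝ) : pairEntropy a a = 2 * a * log 2 := by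
  rw [pairEntropy, ← two_mul a, negMulLog_mul]
  simp only [negMulLog]
  ring

theorem div_add_mem_Icc {a b : ℝ} (ha : 0 ≤ a) (hb : 0 ≤ b) : a / (a + b) ∈ Set.Icc (0 : ℝ) 1 :=
  ⟨div_nonneg ha (add_nonneg ha hb),
    div_le_one_of_le₀ (le_add_of_nonneg_right hb) (add_nonneg ha hb)⟩

theorem pairEntropy_nonneg {a b : ℝ} (ha : 0 ≤ a) (hb : 0 ≤ b) : 0 ≤ pairEntropy a b := by
  obtain ⟨h0, h1⟩ := div_add_mem_Icc ha hb
  rw [pairEntropy_eq_mul_binEntropy]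
  exact mul_nonneg (add_nonneg ha hb) (binEntropy_nonneg h0 h1)

theorem pairEntropy_le {a b : ℝ} (hab : 0 ≤ a + b) : pairEntropy a b ≤ (a + b) * log 2 := by
  rw [pairEntropy_eq_mul_binEntropy]
  exact mul_le_mul_of_nonneg_left binEntropy_le_log_two hab

-- `pairEntropy` is the perspective of the concave function `binEntropy`, hence superadditive.
theorem sum_pairEntropy_le {κ : Type*} (s : Finset κ) {a b : κ → ℝ} (ha : ∀ k, 0 ≤ a k)
    (hb : ∀ k, 0 ≤ b k) :
    ∑ k ∈ s, pairEntropy (a k) (b k) ≤ pairEntropy (∑ k ∈ s, a k) (∑ k ∈ s, b k) := by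
  have hab (k) : 0 ≤ a k + b k := add_nonneg (ha k) (hb k)
  set S := ∑ k ∈ s, a k + ∑ k ∈ s, b k with hS
  have hSsum : ∑ k ∈ s, (a k + b k) = S := sum_add_distrib
  have hS0 : 0 ≤ S := hSsum ▸ sum_nonneg fun k _ => hab k
  rcases hS0.eq_or_lt' with h0 | hpos
  · calc ∑ k ∈ s, pairEntropy (a k) (b k)
      _ ≤ ∑ k ∈ s, (a k + b k) * log 2 := sum_le_sum fun k _ => pairEntropy_le (hab k)
      _ = 0 := by rw [← sum_mul, hSsum, h0, zero_mul]
      _ ≤ _ := pairEntropy_nonneg (sum_nonneg fun k _ => ha k) (sum_nonneg fun k _ => hb k)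
  have hcenter (k) : (a k + b k) * (a k / (a k + b k)) = a k :=
    mul_div_cancel_of_imp' fun h => ((add_eq_zero_iff_of_nonneg (ha k) (hb k)).1 h).1
  have hjensen := strictConcave_binEntropy.concaveOn.le_map_sum (t := s)
    (w := fun k => (a k + b k) / S) (p := fun k => a k / (a k + b k))
    (fun k _ => div_nonneg (hab k) hS0) (by rw [← sum_div, hSsum, div_self hpos.ne'])
    (fun k _ => div_add_mem_Icc (ha k) (hb k))
  simp only [smul_eq_mul, div_mul_eq_mul_div, hcenter, ← pairEntropy_eq_mul_binEntropy,
    ← sum_div] at hjensen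
  rwa [div_le_iff₀' hpos, hS, ← pairEntropy_eq_mul_binEntropy] at hjensen

end PairEntropy

section Entropy

open Real

variable {ι J : Type*} [Fintype ι] [Fintype J]

/-- The Shannon entropy of a vector with nonnegative entries, extended from probability vectors to
be homogeneous of degree one. -/
noncomputable def entropy (x : ι → ℝ) : ℝ := ∑ i, negMulLog (x i) - negMulLog (mass x)

theorem entropy_smul (a : ℝ) (x : ι → ℝ) : entropy (a • x) = a * entropy x := by
  simp only [entropy, map_smul, Pi.smul_apply, smul_eq_mul, negMulLog_mul, sum_add_distrib,
    ← sum_mul, ← mul_sum, ← mass_apply]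
  ring

theorem entropy_posHomogeneous : PosHomogeneous (entropy : (ι → ℝ) → ℝ) :=
  fun a _ x _ => entropy_smul a x

theorem defect_entropy (x y : ι → ℝ) :
    defect entropy x y = pairEntropy (mass x) (mass y) - ∑ i, pairEntropy (x i) (y i) := by
  simp only [defect, entropy, pairEntropy, map_add, Pi.add_apply, sum_sub_distrib, sum_add_distrib]
  ring

theorem defect_entropy_nonneg {x y : ι → ℝ} (hx : 0 ≤ x) (hy : 0 ≤ y) :
    0 ≤ defect entropy x y := by
  rw [defect_entropy, sub_nonneg, mass_apply, mass_apply]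
  exact sum_pairEntropy_le univ hx hy

theorem defect_entropy_le {x y : ι → ℝ} (hx : 0 ≤ x) (hy : 0 ≤ y) :
    defect entropy x y ≤ (mass x + mass y) * log 2 := by
  rw [defect_entropy]
  have hsum : 0 ≤ ∑ i, pairEntropy (x i) (y i) :=
    sum_nonneg fun i _ => pairEntropy_nonneg (hx i) (hy i)
  linarith [pairEntropy_le (add_nonneg (mass_nonneg hx) (mass_nonneg hy))]

theorem gap_entropy_nonneg {x : J → ι → ℝ} (hx : ∀ j, 0 ≤ x j) : 0 ≤ gap entropy x := by
  have hsubadd (v w : ι → ℝ) (hv : 0 ≤ v) (hw : 0 ≤ w) :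
      -entropy (v + w) ≤ -entropy v + -entropy w := by
    have hdefect := defect_entropy_nonneg hv hw
    rw [defect] at hdefect
    linarith
  have hsub := le_sum_of_subadditive_on_pred (fun v : ι → ℝ => -entropy v) (fun v => 0 ≤ v)
    (by simp [entropy]) hsubadd (fun v w => add_nonneg) x (s := univ) (fun j _ => hx j)
  rw [sum_neg_distrib, neg_le_neg_iff] at hsub
  exact sub_nonneg.2 hsub

theorem gap_entropy_le_gap_add_family {x y : J → ι → ℝ} (hx : ∀ j, 0 ≤ x j) (hy : ∀ j, 0 ≤ y j) :
    gap entropy y ≤ gap entropy (fun j => x j + y j) + (∑ j, mass (x j + y j)) * log 2 := by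
  have hdefect : 0 ≤ defect entropy (∑ j, x j) (∑ j, y j) :=
    defect_entropy_nonneg (sum_nonneg fun j _ => hx j) (sum_nonneg fun j _ => hy j)
  have hdefects : ∑ j, defect entropy (x j) (y j) ≤ (∑ j, mass (x j + y j)) * log 2 := by
    rw [sum_mul]
    exact sum_le_sum fun j _ => by rw [map_add]; exact defect_entropy_le (hx j) (hy j)
  linarith [gap_add_family entropy x y, gap_entropy_nonneg hx]

variable {x : J → ι → ℝ}

theorem gap_entropy_excess_le (hx : ∀ j, 0 ≤ x j) (h1 : ∑ j, mass (x j) = 1) :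
    gap entropy (excess x) ≤ gap entropy x + log 2 := by
  simpa only [core_add_excess, h1, one_mul]
    using gap_entropy_le_gap_add_family (core_nonneg hx) (excess_nonneg x)

theorem gap_entropy_shortfall_le (hx : ∀ j, 0 ≤ x j) (h1 : ∑ j, mass (x j) = 1) :
    gap entropy (shortfall x) ≤ log 2 := by
  have hle := gap_entropy_le_gap_add_family (core_nonneg hx) (shortfall_nonneg x)
  simp only [core_add_shortfall] at hle
  rwa [← map_sum, sum_mass_smul_sum h1, map_sum, h1, one_mul,
    entropy_posHomogeneous.gap_smul_const (fun j => mass_nonneg (hx j))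
      (sum_nonneg fun k _ => hx k), zero_add] at hle

theorem sum_pairEntropy_le_inf_sup {x y : ι → ℝ} (hx : 0 ≤ x) (hy : 0 ≤ y) :
    ∑ i, pairEntropy (x i) (y i) ≤ pairEntropy (mass (x ⊓ y)) (mass (x ⊔ y)) := by
  have hsort (i : ι) : pairEntropy (x i) (y i) = pairEntropy ((x ⊓ y) i) ((x ⊔ y) i) := by
    rcases le_total (x i) (y i) with h | h
    · simp [h]
    · rw [pairEntropy_comm]
      simp [h]
  rw [sum_congr rfl fun i _ => hsort i, mass_apply, mass_apply]
  exact sum_pairEntropy_le univ (le_inf hx hy) (hx.trans le_sup_left)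

theorem log_two_sub_binEntropy_overlap_le (hx : ∀ j, 0 ≤ x j) (h1 : ∑ j, mass (x j) = 1) :
    log 2 - binEntropy (overlap x) ≤ ∑ p, defect entropy (halfMix x p) (halfMix x p.swap) := by
  have hpairs (p : J × J) : defect entropy (halfMix x p) (halfMix x p.swap) =
      2 * mass (halfMix x p) * log 2 - ∑ i, pairEntropy (halfMix x p i) (halfMix x p.swap i) := by
    rw [defect_entropy, mass_halfMix_swap, pairEntropy_self]
  have hsup : ∑ p, mass (halfMix x p ⊔ halfMix x p.swap) = 1 - overlap x := by
    have hsplit (p : J × J) : mass (halfMix x p ⊔ halfMix x p.swap)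
        = mass (mix x p) - mass (halfMix x p ⊓ halfMix x p.swap) := by
      rw [eq_sub_iff_add_eq', ← map_add, inf_add_sup, mix]
    simp only [hsplit, sum_sub_distrib, sum_mass_mix h1, overlap]
  simp only [hpairs, sum_sub_distrib, ← sum_mul, ← mul_sum, sum_mass_halfMix hx h1,
    mul_one_div_cancel (two_ne_zero' ℝ), one_mul, sub_le_sub_iff_left]
  calc ∑ p, ∑ i, pairEntropy (halfMix x p i) (halfMix x p.swap i)
    _ ≤ ∑ p, pairEntropy (mass (halfMix x p ⊓ halfMix x p.swap))
          (mass (halfMix x p ⊔ halfMix x p.swap)) := sum_le_sum fun p _ =>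
        sum_pairEntropy_le_inf_sup (halfMix_nonneg hx p) (halfMix_nonneg hx p.swap)
    _ ≤ pairEntropy (overlap x) (1 - overlap x) := by
        rw [← hsup]
        exact sum_pairEntropy_le univ
          (fun p => mass_nonneg (le_inf (halfMix_nonneg hx p) (halfMix_nonneg hx p.swap)))
          (fun p => mass_nonneg ((halfMix_nonneg hx p).trans le_sup_left))
    _ = binEntropy (overlap x) := pairEntropy_one_sub _

theorem le_overlap {δ : ℝ} (hx : ∀ j, 0 ≤ x j) (h1 : ∑ j, mass (x j) = 1) (hδ : δ ≤ 2⁻¹)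
    (hsmall : ∑ p, defect entropy (halfMix x p) (halfMix x p.swap) < log 2 - binEntropy δ) :
    δ ≤ overlap x := by
  by_contra! hlt
  have h0 := overlap_nonneg hx
  have hmono := binEntropy_strictMonoOn ⟨h0, (hlt.trans_le hδ).le⟩ ⟨h0.trans hlt.le, hδ⟩ hlt
  linarith [log_two_sub_binEntropy_overlap_le hx h1]

end Entropy

section QuasiAdditive

variable {ι : Type*} [Fintype ι] {F : (ι → ℝ) → ℝ} {θ : ℝ}

/-- A bounded, positively homogeneous function on the positive cone which is additive up to `θ`
on pairs of equal mass. It encodes a function on the simplex with second modulus of smoothness at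
most `θ`, through its homogeneous extension. -/
structure IsQuasiAdditive (F : (ι → ℝ) → ℝ) (θ : ℝ) : Prop where
  posHomogeneous : PosHomogeneous F
  abs_defect_le_of_mass_eq ⦃x y : ι → ℝ⦄ : 0 ≤ x → 0 ≤ y → mass x = mass y →
    |defect F x y| ≤ θ * mass x
  bounded : ∃ M, ∀ x, 0 ≤ x → |F x| ≤ M * mass x

theorem IsQuasiAdditive.neg (hF : IsQuasiAdditive F θ) : IsQuasiAdditive (fun x => -F x) θ where
  posHomogeneous := hF.posHomogeneous.neg
  abs_defect_le_of_mass_eq x y hx hy hxy := by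
    rw [← abs_neg]
    convert hF.abs_defect_le_of_mass_eq hx hy hxy using 2
    simp only [defect]
    ring
  bounded := by simpa only [abs_neg] using hF.bounded

/-- If `mass x ≤ mass y`, a multiple of `y` can be moved over to `x` so as to equalise the masses;
this only calls for the defect of a pair with half the total mass. -/
theorem IsQuasiAdditive.abs_defect_le_half {K : ℝ} (hF : IsQuasiAdditive F θ)
    (hK : ∀ x y, 0 ≤ x → 0 ≤ y → |defect F x y| ≤ K * (mass x + mass y)) {x y : ι → ℝ}
    (hx : 0 ≤ x) (hy : 0 ≤ y) (hxy : mass x ≤ mass y) :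
    |defect F x y| ≤ (θ / 2 + 1 / 2 * K) * (mass x + mass y) := by
  rcases (mass_nonneg hy).eq_or_lt' with h0 | hpos
  · have hx0 : mass x = 0 := le_antisymm (hxy.trans_eq h0) (mass_nonneg hx)
    simpa [hx0, h0] using hK x y hx hy
  set a := (mass y - mass x) / (2 * mass y) with ha_def
  set b := (mass x + mass y) / (2 * mass y) with hb_def
  have ha : 0 ≤ a := div_nonneg (sub_nonneg.2 hxy) (by positivity)
  have hb : 0 ≤ b := div_nonneg (add_nonneg (mass_nonneg hx) hpos.le) (by positivity)
  have hab : a + b = 1 := by rw [ha_def, hb_def]; field_simp; ring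
  have hma : mass (a • y) = (mass y - mass x) / 2 := by
    rw [map_smul, smul_eq_mul, ha_def]; field_simp
  have hmb : mass (b • y) = (mass x + mass y) / 2 := by
    rw [map_smul, smul_eq_mul, hb_def]; field_simp
  have hay : 0 ≤ a • y := smul_nonneg ha hy
  have hsplit : defect F x y = defect F (x + a • y) (b • y) + defect F x (a • y) := by
    simp only [defect, add_assoc, ← add_smul, hab, one_smul, hF.posHomogeneous ha hy,
      hF.posHomogeneous hb hy]
    linear_combination F y * hab
  have hbal := hF.abs_defect_le_of_mass_eq (add_nonneg hx hay) (smul_nonneg hb hy)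
    (by rw [map_add, hma, hmb]; ring)
  have hrest := hK x (a • y) hx hay
  rw [map_add, hma] at hbal
  rw [hma] at hrest
  rw [hsplit]
  exact (abs_add_le _ _).trans ((add_le_add hbal hrest).trans_eq (by ring))

theorem abs_defect_le_of_bounded {M : ℝ} (hM : ∀ x, 0 ≤ x → |F x| ≤ M * mass x) {x y : ι → ℝ}
    (hx : 0 ≤ x) (hy : 0 ≤ y) : |defect F x y| ≤ 2 * M * (mass x + mass y) := by
  have hxy := hM (x + y) (add_nonneg hx hy)
  rw [map_add] at hxy
  calc |F (x + y) - F x - F y|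
    _ ≤ |F (x + y)| + |F x| + |F y| :=
        (abs_sub _ _).trans (add_le_add_left (abs_sub _ _) _)
    _ ≤ 2 * M * (mass x + mass y) := by linarith [hM x hx, hM y hy]

theorem IsQuasiAdditive.abs_defect_le (hF : IsQuasiAdditive F θ) (hθ : 0 ≤ θ) {x y : ι → ℝ}
    (hx : 0 ≤ x) (hy : 0 ≤ y) : |defect F x y| ≤ θ * (mass x + mass y) := by
  set T := {K : ℝ | ∀ x y, 0 ≤ x → 0 ≤ y → |defect F x y| ≤ K * (mass x + mass y)}
  have hclosed : IsClosed T := by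
    simp only [T, Set.ofPred_forall]
    exact isClosed_iInter fun x => isClosed_iInter fun y => isClosed_iInter fun _ =>
      isClosed_iInter fun _ => isClosed_le (by fun_prop) (by fun_prop)
  have hupper : IsUpperSet T := fun K L hKL hK x y hx hy => (hK x y hx hy).trans <|
    mul_le_mul_of_nonneg_right hKL (add_nonneg (mass_nonneg hx) (mass_nonneg hy))
  have hne : T.Nonempty := by
    obtain ⟨M, hM⟩ := hF.bounded
    exact ⟨2 * M, fun x y hx hy => abs_defect_le_of_bounded hM hx hy⟩
  have hstep (K : ℝ) (hK : K ∈ T) (_ : 0 ≤ K) : θ / 2 + 1 / 2 * K ∈ T := fun x y hx hy => by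
    rcases le_total (mass x) (mass y) with h | h
    · exact hF.abs_defect_le_half hK hx hy h
    · rw [defect_comm, add_comm (mass x)]
      exact hF.abs_defect_le_half hK hy hx h
  have hT := div_one_sub_mem_of_contracting hclosed hupper hne (div_nonneg hθ zero_le_two)
    one_half_pos.le one_half_lt_one hstep x y hx hy
  rwa [sub_half, div_div_div_cancel_right₀ two_ne_zero, div_one] at hT

end QuasiAdditive

section EntropyDominated

open Real

variable {ι : Type*} [Fintype ι] {F : (ι → ℝ) → ℝ} {θ A A' K K' δ : ℝ}

/-- The gaps of `F` are controlled by those of the entropy, up to an error `K` per unit of mass. As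
families are finite, index types in `Type` are enough. -/
def EntropyDominated (F : (ι → ℝ) → ℝ) (A K : ℝ) : Prop :=
  ∀ ⦃J : Type⦄ [Fintype J] ⦃x : J → ι → ℝ⦄, (∀ j, 0 ≤ x j) →
    gap F x ≤ A * gap entropy x + K * ∑ j, mass (x j)

theorem isClosed_setOf_entropyDominated (F : (ι → ℝ) → ℝ) (A : ℝ) :
    IsClosed {K | EntropyDominated F A K} := by
  simp only [EntropyDominated, Set.ofPred_forall]
  exact isClosed_iInter fun J => isClosed_iInter fun _ => isClosed_iInter fun x =>
    isClosed_iInter fun _ => isClosed_le (by fun_prop) (by fun_prop)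

theorem EntropyDominated.mono (h : EntropyDominated F A K) (hK : K ≤ K') :
    EntropyDominated F A K' := fun _ _ _ hx => (h hx).trans <| add_le_add_right
  (mul_le_mul_of_nonneg_right hK (sum_nonneg fun j _ => mass_nonneg (hx j))) _

theorem entropyDominated_of_bounded {M : ℝ} (hM : ∀ x, 0 ≤ x → |F x| ≤ M * mass x) (hA : 0 ≤ A) :
    EntropyDominated F A (2 * M) := fun J _ x hx => by
  have htotal := hM _ (sum_nonneg fun j _ => hx j : 0 ≤ ∑ j, x j)
  have hterms := sum_le_sum fun j (_ : j ∈ univ) => hM (x j) (hx j)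
  rw [map_sum] at htotal
  rw [← mul_sum] at hterms
  have hgap : gap F x ≤ |F (∑ j, x j)| + ∑ j, |F (x j)| :=
    (le_abs_self _).trans ((abs_sub _ _).trans (add_le_add_right (abs_sum_le_sum_abs _ _) _))
  linarith [mul_nonneg hA (gap_entropy_nonneg hx)]

theorem entropyDominated_of_normalized (hF : PosHomogeneous F)
    (h : ∀ ⦃J : Type⦄ [Fintype J] ⦃x : J → ι → ℝ⦄, (∀ j, 0 ≤ x j) → ∑ j, mass (x j) = 1 →
      gap F x ≤ A * gap entropy x + K) : EntropyDominated F A K := fun J _ x hx => by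
  have hnonneg : 0 ≤ ∑ j, mass (x j) := sum_nonneg fun j _ => mass_nonneg (hx j)
  rcases hnonneg.eq_or_lt' with h0 | hpos
  · have hx0 : x = fun _ => (0 : ℝ) • 0 := funext fun j => by
      rw [smul_zero]
      exact eq_zero_of_mass_eq_zero (hx j)
        ((sum_eq_zero_iff_of_nonneg fun j _ => mass_nonneg (hx j)).1 h0 j (mem_univ j))
    have hgap {Φ : (ι → ℝ) → ℝ} (hΦ : PosHomogeneous Φ) : gap Φ x = 0 :=
      hx0 ▸ hΦ.gap_smul_const (fun _ => le_rfl) le_rfl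
    rw [hgap hF, hgap entropy_posHomogeneous, h0, mul_zero, mul_zero, add_zero]
  have hinv := inv_nonneg.2 hpos.le
  have hscaled := h (x := fun j => (∑ k, mass (x k))⁻¹ • x j) (fun j => smul_nonneg hinv (hx j))
    (by simp only [map_smul, smul_eq_mul, ← mul_sum, inv_mul_cancel₀ hpos.ne'])
  rw [hF.gap_smul hinv hx, entropy_posHomogeneous.gap_smul hinv hx, inv_mul_le_iff₀ hpos]
    at hscaled
  refine hscaled.trans_eq ?_
  field_simp

theorem IsQuasiAdditive.gap_le_of_le_overlap (hF : IsQuasiAdditive F θ) (hθ : 0 ≤ θ) (hA : 0 ≤ A)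
    (hA' : 0 ≤ A') (hK : 0 ≤ K) (hK' : 0 ≤ K') (hdom : EntropyDominated F A K)
    (hdom' : EntropyDominated (fun v => -F v) A' K') {J : Type} [Fintype J] {x : J → ι → ℝ}
    (hx : ∀ j, 0 ≤ x j) (h1 : ∑ j, mass (x j) = 1) (hδ : δ ≤ overlap x) :
    gap F x ≤ A * gap entropy x + ((A + A') * log 2 + 2 * θ + (1 - 2 * δ) * (K + K')) := by
  have hmass : ∑ j, mass (excess x j) ≤ 1 - 2 * δ := by linarith [sum_mass_excess_le h1]
  have hexcess := hdom (excess_nonneg x)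
  have hshortfall := hdom' (shortfall_nonneg x)
  simp only [gap_neg, mass_shortfall h1] at hshortfall
  have hsum {y : J → ι → ℝ} (hy : ∀ j, 0 ≤ y j) (hm : ∑ j, mass (core x j + y j) = 1) :
      |∑ j, defect F (core x j) (y j)| ≤ θ := by
    calc |∑ j, defect F (core x j) (y j)|
      _ ≤ ∑ j, θ * (mass (core x j) + mass (y j)) := (abs_sum_le_sum_abs _ _).trans <|
          sum_le_sum fun j _ => hF.abs_defect_le hθ (core_nonneg hx j) (hy j)
      _ = θ := by simp only [← map_add, ← mul_sum, hm, mul_one]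
  have hdefect_excess := hsum (excess_nonneg x) (by simpa only [core_add_excess] using h1)
  have hdefect_shortfall := hsum (shortfall_nonneg x) (by
    simpa only [map_add, mass_shortfall h1, ← core_add_excess x] using h1)
  have hgap := hF.posHomogeneous.gap_eq_gap_excess_sub hx h1
  linarith [mul_le_mul_of_nonneg_left (gap_entropy_excess_le hx h1) hA,
    mul_le_mul_of_nonneg_left (gap_entropy_shortfall_le hx h1) hA',
    mul_le_mul_of_nonneg_left hmass hK, mul_le_mul_of_nonneg_left hmass hK',
    abs_le.1 hdefect_excess, abs_le.1 hdefect_shortfall]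

theorem IsQuasiAdditive.gap_sub_gap_mix_le (hF : IsQuasiAdditive F θ) {J : Type*} [Fintype J]
    {x : J → ι → ℝ} (hx : ∀ j, 0 ≤ x j) (h1 : ∑ j, mass (x j) = 1) :
    gap F x - gap F (mix x) ≤ θ / 2 := by
  rw [hF.posHomogeneous.gap_eq_gap_mix_add hx h1, add_sub_cancel_left]
  calc ∑ p, defect F (halfMix x p) (halfMix x p.swap)
    _ ≤ ∑ p, θ * mass (halfMix x p) := sum_le_sum fun p _ => (le_abs_self _).trans <|
        hF.abs_defect_le_of_mass_eq (halfMix_nonneg hx p) (halfMix_nonneg hx p.swap)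
          (mass_halfMix_swap x p).symm
    _ = θ / 2 := by rw [← mul_sum, sum_mass_halfMix hx h1, mul_one_div]

-- Mixing is repeated for as long as it lowers `gap entropy` by a fixed amount; once it no longer
-- does, the overlap is large and peeling applies.
theorem IsQuasiAdditive.entropyDominated_improve (hF : IsQuasiAdditive F θ) (hθ : 0 ≤ θ)
    (hA : 0 ≤ A) (hA' : 0 ≤ A') (hK : 0 ≤ K) (hK' : 0 ≤ K') (hdom : EntropyDominated F A K)
    (hdom' : EntropyDominated (fun v => -F v) A' K') (hδ : δ < 2⁻¹)
    (hθA : θ ≤ 2 * A * (log 2 - binEntropy δ)) :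
    EntropyDominated F A ((A + A') * log 2 + 2 * θ + (1 - 2 * δ) * (K + K')) := by
  set κ := log 2 - binEntropy δ
  have hκ : 0 < κ := sub_pos.2 (binEntropy_lt_log_two.2 hδ.ne)
  suffices hind : ∀ (N : ℕ) ⦃J : Type⦄ [Fintype J] ⦃x : J → ι → ℝ⦄, (∀ j, 0 ≤ x j) →
      ∑ j, mass (x j) = 1 → gap entropy x < N * κ →
      gap F x ≤ A * gap entropy x + ((A + A') * log 2 + 2 * θ + (1 - 2 * δ) * (K + K')) by
    refine entropyDominated_of_normalized hF.posHomogeneous fun J _ x hx h1 => ?_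
    obtain ⟨N, hN⟩ := exists_nat_gt (gap entropy x / κ)
    exact hind N hx h1 ((div_lt_iff₀ hκ).1 hN)
  intro N
  induction N with
  | zero =>
    intro J _ x hx _ hlt
    rw [Nat.cast_zero, zero_mul] at hlt
    exact absurd hlt (gap_entropy_nonneg hx).not_gt
  | succ N ih =>
    intro J _ x hx h1 hlt
    by_cases hoverlap : δ ≤ overlap x
    · exact hF.gap_le_of_le_overlap hθ hA hA' hK hK' hdom hdom' hx h1 hoverlap
    have hgain : κ ≤ gap entropy x - gap entropy (mix x) := by
      rw [entropy_posHomogeneous.gap_eq_gap_mix_add hx h1, add_sub_cancel_left]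
      exact not_lt.1 (mt (le_overlap hx h1 hδ.le) hoverlap)
    push_cast at hlt
    have hmix := ih (mix_nonneg hx) (sum_mass_mix h1) (by linarith)
    linarith [hF.gap_sub_gap_mix_le hx h1, mul_le_mul_of_nonneg_left hgain hA]

-- With equal constants for `F` and `-F` the improvement contracts by `2 * (1 - 2 * δ)`, which
-- forces `1 / 4 < δ` and a large `A`. Once `-F` has such a bound, a small `δ` contracts the
-- constant of `F`.
theorem exists_entropyDominated_crude : ∃ A K : ℝ, 0 ≤ A ∧ 0 ≤ K ∧
    ∀ {ι : Type*} [Fintype ι] {F : (ι → ℝ) → ℝ} {θ : ℝ}, 0 ≤ θ → θ ≤ 1 → IsQuasiAdditive F θ →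
      EntropyDominated F A K := by
  set κ := log 2 - binEntropy (3 / 8)
  have hκ : 0 < κ := sub_pos.2 (binEntropy_lt_log_two.2 (by norm_num))
  have hA : 0 ≤ 1 / (2 * κ) := by positivity
  have hB : 0 ≤ 2 * (1 / (2 * κ)) * log 2 + 2 := by positivity
  refine ⟨1 / (2 * κ), (2 * (1 / (2 * κ)) * log 2 + 2) / (1 - 1 / 2), hA,
    div_nonneg hB (by norm_num), fun {ι _ F θ} hθ hθ1 hF => ?_⟩
  have hθA : θ ≤ 2 * (1 / (2 * κ)) * κ := hθ1.trans_eq (by field_simp)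
  have hstep {G : (ι → ℝ) → ℝ} (hG : IsQuasiAdditive G θ) {K : ℝ} (hK : 0 ≤ K)
      (hdom : EntropyDominated G (1 / (2 * κ)) K)
      (hdom' : EntropyDominated (fun v => -G v) (1 / (2 * κ)) K) :
      EntropyDominated G (1 / (2 * κ)) (2 * (1 / (2 * κ)) * log 2 + 2 + 1 / 2 * K) :=
    (hG.entropyDominated_improve hθ hA hA hK hK hdom hdom' (δ := 3 / 8) (by norm_num) hθA).mono
      (by linarith)
  obtain ⟨M, hM⟩ := hF.bounded
  obtain ⟨M', hM'⟩ := hF.neg.bounded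
  refine (div_one_sub_mem_of_contracting
    (T := {K | EntropyDominated F _ K} ∩ {K | EntropyDominated (fun v => -F v) _ K})
    ((isClosed_setOf_entropyDominated F _).inter (isClosed_setOf_entropyDominated _ _))
    (fun K L hKL hK => ⟨hK.1.mono hKL, hK.2.mono hKL⟩)
    ⟨max (2 * M) (2 * M'), (entropyDominated_of_bounded hM hA).mono (le_max_left _ _),
      (entropyDominated_of_bounded hM' hA).mono (le_max_right _ _)⟩
    hB one_half_pos.le one_half_lt_one fun K hK hK0 =>
      ⟨hstep hF hK0 hK.1 hK.2, hstep hF.neg hK0 hK.2 (by simp only [neg_neg]; exact hK.1)⟩).1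

theorem exists_binEntropy_le {η : ℝ} (hη : 0 < η) : ∃ δ, 0 < δ ∧ δ < 2⁻¹ ∧ binEntropy δ ≤ η := by
  have hev : ∀ᶠ δ in nhdsWithin (0 : ℝ) (Set.Ioi 0), binEntropy δ < η :=
    nhdsWithin_le_nhds <| binEntropy_continuous.continuousAt.eventually_lt_const (by simpa)
  obtain ⟨δ, hδη, hδ⟩ := (hev.and (Ioo_mem_nhdsGT (by norm_num : (0 : ℝ) < 2⁻¹))).exists
  exact ⟨δ, hδ.1, hδ.2, hδη.le⟩

theorem exists_entropyDominated {θ : ℝ} (hθ : 0 ≤ θ) (hθ1 : θ < 1) : ∃ K : ℝ,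
    ∀ {ι : Type*} [Fintype ι] {F : (ι → ℝ) → ℝ}, IsQuasiAdditive F θ →
      EntropyDominated F (1 / (2 * log 2)) K := by
  have hlog : 0 < log 2 := log_pos one_lt_two
  obtain ⟨A', K', hA', hK', hcrude⟩ := exists_entropyDominated_crude
  obtain ⟨δ, hδ0, hδ, hentropy⟩ := exists_binEntropy_le (mul_pos (sub_pos.2 hθ1) hlog)
  set A := 1 / (2 * log 2) with hA_def
  have hA : 0 ≤ A := by positivity
  have hAlog : 2 * A * log 2 = 1 := by rw [hA_def]; field_simp
  have hB : 0 ≤ (A + A') * log 2 + 2 * θ + (1 - 2 * δ) * K' :=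
    add_nonneg (by positivity) (mul_nonneg (by linarith) hK')
  refine ⟨((A + A') * log 2 + 2 * θ + (1 - 2 * δ) * K') / (1 - (1 - 2 * δ)),
    fun {ι _ F} hF => ?_⟩
  have hθA : θ ≤ 2 * A * (log 2 - binEntropy δ) := by
    have hscaled := mul_le_mul_of_nonneg_left hentropy (by positivity : 0 ≤ 2 * A)
    linear_combination hscaled - θ * hAlog
  obtain ⟨M, hM⟩ := hF.bounded
  exact div_one_sub_mem_of_contracting (isClosed_setOf_entropyDominated F A)
    (fun K L hKL hK => hK.mono hKL) ⟨2 * M, entropyDominated_of_bounded hM hA⟩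
    hB (by linarith) (by linarith) fun K hK hK0 =>
      (hF.entropyDominated_improve hθ hA hA' hK0 hK' hK (hcrude hθ hθ1.le hF.neg) hδ hθA).mono
        (by linarith)

end EntropyDominated

section SecondDifference

variable {E : Type*} [AddCommGroup E] [Module ℝ E] {s : Set E} {f : E → ℝ} {c c' : ℝ}

theorem diffBound_mono {m : ℕ} (hf : diffBound m s f c) (hc : c ≤ c') : diffBound m s f c' :=
  fun x h hmem => (hf x h hmem).trans hc

theorem abs_two_mul_midpoint_sub_le (hs : Convex ℝ s) (hf : diffBound 2 s f c) {v w : E}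
    (hv : v ∈ s) (hw : w ∈ s) : |2 * f (midpoint ℝ v w) - f v - f w| ≤ c := by
  obtain ⟨h, hmid, hend⟩ : ∃ h : E, v + h = midpoint ℝ v w ∧ v + (2 : ℝ) • h = w :=
    ⟨midpoint ℝ v w - v, add_sub_cancel _ _, by rw [midpoint_sub_left, smul_smul]; simp⟩
  have hdiff := hf v h fun j hj => by
    interval_cases j
    · simpa using hv
    · simpa [hmid] using hs.midpoint_mem hv hw
    · simpa [hend] using hw
  rw [← abs_neg]
  convert hdiff using 2
  simp only [sum_range_succ, sum_range_zero, Nat.cast_zero, zero_smul, add_zero, Nat.cast_one,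
    one_smul, hmid, Nat.cast_ofNat, hend, Nat.choose_zero_right, Nat.choose_one_right,
    Nat.choose_self]
  norm_num
  ring

end SecondDifference

section HomogeneousExtension

variable {ι : Type*} [Fintype ι] {f : (ι → ℝ) → ℝ} {x : ι → ℝ}

/-- The extension of a function on the simplex to a positively homogeneous function on the positive
cone. At `mass x = 0` it takes the value `0`, whatever the junk value `0⁻¹` is. -/
noncomputable def homExt (f : (ι → ℝ) → ℝ) (x : ι → ℝ) : ℝ := mass x * f ((mass x)⁻¹ • x)

theorem homExt_of_mem_stdSimplex (hx : x ∈ stdSimplex ℝ ι) : homExt f x = f x := by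
  rw [homExt, (mem_stdSimplex_iff_mass.1 hx).2, one_mul, inv_one, one_smul]

theorem homExt_posHomogeneous (f : (ι → ℝ) → ℝ) : PosHomogeneous (homExt f) := fun a _ x _ => by
  rcases eq_or_ne a 0 with rfl | ha
  · simp [homExt]
  · rw [homExt, homExt, map_smul, smul_eq_mul, mul_inv_rev, mul_smul, inv_smul_smul₀ ha, mul_assoc]

theorem inv_mass_smul_mem_stdSimplex (hx : 0 ≤ x) (hm : mass x ≠ 0) :
    (mass x)⁻¹ • x ∈ stdSimplex ℝ ι :=
  mem_stdSimplex_iff_mass.2 ⟨smul_nonneg (inv_nonneg.2 (mass_nonneg hx)) hx, by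
    rw [map_smul, smul_eq_mul, inv_mul_cancel₀ hm]⟩

theorem isQuasiAdditive_homExt {θ M : ℝ} (hf : diffBound 2 (stdSimplex ℝ ι) f θ)
    (hM : ∀ v ∈ stdSimplex ℝ ι, |f v| ≤ M) : IsQuasiAdditive (homExt f) θ where
  posHomogeneous := homExt_posHomogeneous f
  abs_defect_le_of_mass_eq x y hx hy hxy := by
    rcases eq_or_ne (mass x) 0 with h0 | hne
    · simp [defect, homExt, ← hxy, h0]
    have hmid : (mass (x + y))⁻¹ • (x + y)
        = midpoint ℝ ((mass x)⁻¹ • x) ((mass x)⁻¹ • y) := by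
      rw [midpoint_eq_smul_add, map_add, ← hxy, ← two_mul, mul_inv, mul_smul, smul_add,
        invOf_eq_inv]
    have hdefect : defect (homExt f) x y
        = mass x * (2 * f (midpoint ℝ ((mass x)⁻¹ • x) ((mass x)⁻¹ • y))
          - f ((mass x)⁻¹ • x) - f ((mass x)⁻¹ • y)) := by
      rw [defect, homExt, hmid, map_add, homExt, homExt, ← hxy]
      ring
    rw [hdefect, abs_mul, abs_of_nonneg (mass_nonneg hx), mul_comm θ]
    exact mul_le_mul_of_nonneg_left (abs_two_mul_midpoint_sub_le (convex_stdSimplex ℝ ι) hf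
      (inv_mass_smul_mem_stdSimplex hx hne)
      (hxy ▸ inv_mass_smul_mem_stdSimplex hy (hxy ▸ hne))) (mass_nonneg hx)
  bounded := ⟨M, fun x hx => by
    rcases eq_or_ne (mass x) 0 with h0 | hne
    · simp [homExt, h0]
    · rw [homExt, abs_mul, abs_of_nonneg (mass_nonneg hx), mul_comm M]
      exact mul_le_mul_of_nonneg_left (hM _ (inv_mass_smul_mem_stdSimplex hx hne))
        (mass_nonneg hx)⟩

end HomogeneousExtension

section ApproxConvex

/-- Convexity on `s` up to an additive error `C` in Jensen's inequality. -/
def ApproxConvexOn {E : Type*} [AddCommMonoid E] [Module ℝ E] (s : Set E) (g : E → ℝ) (C : ℝ) :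
    Prop :=
  ∀ ⦃J : Type⦄ [Fintype J] ⦃w : J → ℝ⦄ ⦃v : J → E⦄, (∀ j, 0 ≤ w j) → ∑ j, w j = 1 →
    (∀ j, v j ∈ s) → g (∑ j, w j • v j) ≤ ∑ j, w j * g (v j) + C

theorem ApproxConvexOn.nonneg {E : Type*} [AddCommMonoid E] [Module ℝ E] {s : Set E} {g : E → ℝ}
    {C : ℝ} (h : ApproxConvexOn s g C) {u : E} (hu : u ∈ s) : 0 ≤ C := by
  simpa using h (J := Unit) (w := 1) (fun _ => zero_le_one) (by simp) (fun _ => hu)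

theorem EntropyDominated.approxConvexOn {ι : Type*} [Fintype ι] {F : (ι → ℝ) → ℝ} {A K : ℝ}
    (hF : PosHomogeneous F) (hdom : EntropyDominated F A K) :
    ApproxConvexOn (stdSimplex ℝ ι) (fun v => F v - A * entropy v) K := fun J _ w v hw h1 hv => by
  have hle := hdom (x := fun j => w j • v j) fun j => smul_nonneg (hw j) (hv j).1
  simp only [gap, hF (hw _) (hv _).1, entropy_smul, map_smul, (mem_stdSimplex_iff_mass.1 (hv _)).2,
    smul_eq_mul, mul_one, h1] at hle
  have hsum : ∑ j, w j * (F (v j) - A * entropy (v j))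
      = ∑ j, w j * F (v j) - A * ∑ j, w j * entropy (v j) := by
    rw [mul_sum, ← sum_sub_distrib]
    exact sum_congr rfl fun j _ => by ring
  linarith

variable {E : Type*} [TopologicalSpace E] [AddCommGroup E] [Module ℝ E] {s : Set E} {g : E → ℝ}
  {C : ℝ} {u : E} {r : ℝ}

theorem ApproxConvexOn.notMem_closure_convexHull_graph (hs : Convex ℝ s) (hclosed : IsClosed s)
    (hg : ContinuousOn g s) (h : ApproxConvexOn s g C) (hr : r < g u - C) :
    (u, r) ∉ closure (convexHull ℝ ((fun v => (v, g v)) '' s)) := by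
  have hepi : IsClosed {p : E × ℝ | p.1 ∈ s ∧ g p.1 - C ≤ p.2} :=
    IsClosed.epigraph hclosed (hg.sub continuousOn_const)
  refine fun hmem => hr.not_ge (closure_minimal (fun p hp => ?_) hepi hmem).2
  obtain ⟨J, _, w, z, hw, h1, hz, rfl⟩ := mem_convexHull_iff_exists_fintype.1 hp
  choose v hv hvz using hz
  obtain rfl : (fun j => (v j, g (v j))) = z := funext hvz
  have hjensen := h hw h1 hv
  simp only [Set.mem_ofPred_eq, Prod.fst_sum, Prod.snd_sum, Prod.smul_mk, smul_eq_mul]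
  exact ⟨hs.sum_mem (fun j _ => hw j) h1 fun j _ => hv j, by linarith⟩

variable [IsTopologicalAddGroup E] [ContinuousSMul ℝ E] [LocallyConvexSpace ℝ E]

theorem ApproxConvexOn.exists_affine_minorant (hs : Convex ℝ s) (hclosed : IsClosed s)
    (hg : ContinuousOn g s) (h : ApproxConvexOn s g C) (hu : u ∈ s) (hr : r < g u - C) :
    ∃ (φ : StrongDual ℝ E) (c : ℝ), (∀ v ∈ s, φ v + c ≤ g v) ∧ φ u + c = r := by
  obtain ⟨Ψ, α, hlt, hgt⟩ := geometric_hahn_banach_closed_point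
    (convex_convexHull ℝ ((fun v => (v, g v)) '' s)).closure isClosed_closure
    (h.notMem_closure_convexHull_graph hs hclosed hg hr)
  set ψ : StrongDual ℝ E := Ψ.comp (ContinuousLinearMap.inl ℝ E ℝ)
  set β := Ψ (0, 1)
  have hΨ (v : E) (t : ℝ) : Ψ (v, t) = ψ v + t * β := by
    rw [← smul_eq_mul, ← map_smul, Prod.smul_mk, smul_zero, smul_eq_mul, mul_one]
    exact (congrArg Ψ (by simp)).trans (map_add Ψ (v, 0) (0, t))
  have hsep (v : E) (hv : v ∈ s) : ψ v + g v * β < ψ u + r * β := by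
    rw [← hΨ, ← hΨ]
    exact (hlt _ (subset_closure (subset_convexHull ℝ _ ⟨v, hv, rfl⟩))).trans hgt
  have hβ : β < 0 := by
    have hru : r < g u := hr.trans_le (sub_le_self _ (h.nonneg hu))
    have hprod : (g u - r) * β < 0 := by linarith [hsep u hu]
    exact (pos_iff_neg_of_mul_neg hprod).1 (sub_pos.2 hru)
  refine ⟨(-β)⁻¹ • ψ, r - (-β)⁻¹ * ψ u, fun v hv => ?_, ?_⟩
  · have hle : (-β)⁻¹ * (ψ v - ψ u) ≤ g v - r := by
      rw [inv_mul_le_iff₀ (neg_pos.2 hβ)]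
      linarith [hsep v hv]
    rw [smul_apply, smul_eq_mul]
    linarith
  · rw [smul_apply, smul_eq_mul, add_sub_cancel]

/-- The vectors `b` whose linear function `v ↦ ∑ i, v i * b i` stays below `g` on the simplex. On
the simplex all affine functions are of this form. -/
def affineMinorants {ι : Type*} [Fintype ι] (g : (ι → ℝ) → ℝ) : Set (ι → ℝ) :=
  {b | ∀ v ∈ stdSimplex ℝ ι, ∑ i, v i * b i ≤ g v}

theorem ApproxConvexOn.exists_mem_affineMinorants {ι : Type*} [Fintype ι] {g : (ι → ℝ) → ℝ}
    {u : ι → ℝ} (hg : ContinuousOn g (stdSimplex ℝ ι)) (h : ApproxConvexOn (stdSimplex ℝ ι) g C)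
    (hu : u ∈ stdSimplex ℝ ι) (hr : r < g u - C) :
    ∃ b ∈ affineMinorants g, ∑ i, u i * b i = r := by
  classical
  obtain ⟨φ, c, hle, heq⟩ :=
    h.exists_affine_minorant (convex_stdSimplex ℝ ι) (isClosed_stdSimplex ℝ ι) hg hu hr
  have hφ (v : ι → ℝ) (hv : v ∈ stdSimplex ℝ ι) :
      ∑ i, v i * (φ (fun j => if i = j then 1 else 0) + c) = φ v + c := by
    rw [← ContinuousLinearMap.coe_coe φ, LinearMap.pi_apply_eq_sum_univ (φ : (ι → ℝ) →ₗ[ℝ] ℝ) v]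
    simp only [mul_add, sum_add_distrib, ← sum_mul, hv.2, one_mul, smul_eq_mul]
  exact ⟨_, fun v hv => (hφ v hv).trans_le (hle v hv), (hφ u hu).trans heq⟩

end ApproxConvex

section VariationalPrinciple

open Real

variable {ι : Type*} [Fintype ι]

theorem continuous_entropy : Continuous (entropy : (ι → ℝ) → ℝ) := by
  unfold entropy
  simp only [mass_apply]
  fun_prop

theorem entropy_of_mem_stdSimplex {v : ι → ℝ} (hv : v ∈ stdSimplex ℝ ι) :
    entropy v = ∑ i, negMulLog (v i) := by
  rw [entropy, (mem_stdSimplex_iff_mass.1 hv).2, negMulLog_one, sub_zero]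

theorem negMulLog_le_sub_sub_mul_log {v t : ℝ} (hv : 0 ≤ v) (ht : 0 < t) :
    negMulLog v ≤ t - v - v * log t := by
  have hscale := negMulLog_mul t (v / t)
  rw [mul_div_cancel₀ v ht.ne'] at hscale
  have htangent := mul_le_mul_of_nonneg_left (negMulLog_le_one_sub_self (div_nonneg hv ht.le)) ht.le
  rw [mul_sub, mul_one, mul_div_cancel₀ v ht.ne'] at htangent
  have hlog : v / t * negMulLog t = -(v * log t) := by rw [negMulLog]; field_simp
  linarith

theorem log_two_rpow (c : ℝ) : log (2 ^ c) = c * log 2 := log_rpow two_pos c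

theorem mem_affineMinorants_neg_entropy_iff {c : ι → ℝ} :
    c ∈ affineMinorants (fun v => -entropy v / log 2) ↔ ∑ i, (2 : ℝ) ^ c i ≤ 1 := by
  have hlog : 0 < log 2 := log_pos one_lt_two
  constructor
  · intro hc
    set t : ι → ℝ := fun i => 2 ^ c i
    have ht : 0 ≤ t := fun i => (rpow_pos_of_pos two_pos _).le
    rw [← mass_apply t]
    rcases (mass_nonneg ht).eq_or_lt' with h0 | hpos
    · exact h0.trans_le zero_le_one
    have hv : ∑ i, ((mass t)⁻¹ • t) i * c i ≤ -entropy ((mass t)⁻¹ • t) / log 2 :=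
      hc _ (inv_mass_smul_mem_stdSimplex ht hpos.ne')
    have hlinear : ∑ i, ((mass t)⁻¹ • t) i * c i = (mass t)⁻¹ * ∑ i, t i * c i := by
      simp only [Pi.smul_apply, smul_eq_mul, mul_assoc, mul_sum]
    have hentropy : entropy t = -(∑ i, t i * c i) * log 2 - negMulLog (mass t) := by
      rw [entropy, neg_mul, sum_mul, ← sum_neg_distrib]
      congr 1
      exact sum_congr rfl fun i _ => by rw [negMulLog, log_two_rpow, neg_mul, mul_assoc]
    rw [hlinear, entropy_smul, hentropy, le_div_iff₀ hlog, ← mul_neg, mul_assoc,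
      mul_le_mul_iff_right₀ (inv_pos.2 hpos), negMulLog] at hv
    have hmul : mass t * log (mass t) ≤ 0 := by linarith
    exact (log_nonpos_iff hpos.le).1 (nonpos_of_mul_nonpos_right hmul hpos)
  · intro hsum v hv
    have hgibbs : ∑ i, negMulLog (v i) ≤ ∑ i, ((2 : ℝ) ^ c i - v i - v i * (c i * log 2)) :=
      sum_le_sum fun i _ => log_two_rpow (c i) ▸
        negMulLog_le_sub_sub_mul_log (hv.1 i) (rpow_pos_of_pos two_pos _)
    simp only [sum_sub_distrib, ← mul_assoc, ← sum_mul, hv.2] at hgibbs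
    rw [le_div_iff₀ hlog, entropy_of_mem_stdSimplex hv]
    linarith

end VariationalPrinciple

section Duality

open Real

variable {ι : Type*} [Fintype ι] {N N' : (ι → ℝ) → ℝ} {u x y a b : ι → ℝ}

theorem abs_mul_single_le (hN : IsLatticeNorm N) [DecidableEq ι] (x : ι → ℝ) (i : ι) :
    |x i| * N (Pi.single i 1) ≤ N x := by
  obtain ⟨-, -, hsmul, -, hmono⟩ := hN
  rw [← hsmul]
  refine hmono _ _ fun j => ?_
  rcases eq_or_ne j i with rfl | hj
  · simp
  · simp [hj]

theorem bddAbove_dualNorm (hN : IsLatticeNorm N) (y : ι → ℝ) :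
    BddAbove {v : ℝ | ∃ x, N x ≤ 1 ∧ v = ∑ i, x i * y i} := by
  classical
  have hpos (i) : 0 < N (Pi.single i 1) := (hN.1 _).lt_of_ne' <| (hN.2.1 _).not.2 (by simp)
  refine ⟨∑ i, (N (Pi.single i 1))⁻¹ * |y i|, ?_⟩
  rintro _ ⟨x, hx, rfl⟩
  refine sum_le_sum fun i _ => (le_abs_self _).trans ?_
  rw [abs_mul]
  refine mul_le_mul_of_nonneg_right ?_ (abs_nonneg _)
  rw [← one_div, le_div_iff₀ (hpos i)]
  exact (abs_mul_single_le hN x i).trans hx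

theorem sum_abs_mul_abs_le_one (hN : IsLatticeNorm N) (hx : N x ≤ 1) (hy : dualNorm N y ≤ 1) :
    ∑ i, |x i| * |y i| ≤ 1 := by
  refine le_trans (le_csSup (bddAbove_dualNorm hN y)
    ⟨fun i => |x i| * SignType.sign (y i), ?_, ?_⟩) hy
  · refine (hN.2.2.2.2 _ x fun i => ?_).trans hx
    rw [abs_mul, abs_abs]
    exact mul_le_of_le_one_right (abs_nonneg _) (by cases SignType.sign (y i) <;> simp)
  · exact sum_congr rfl fun i _ => by rw [mul_assoc, sign_mul_self]

theorem latticeIndicator_mem_Icc (hu : u ∈ stdSimplex ℝ ι)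
    (hpair : ∀ ⦃x y⦄, N x ≤ 1 → N' y ≤ 1 → ∑ i, |x i| * |y i| ≤ 1)
    (ha : N (fun i => 2 ^ a i) ≤ 1) (hb : N' (fun i => 2 ^ b i) ≤ 1) :
    latticeIndicator N u ∈ Set.Icc (∑ i, u i * a i) (-entropy u / log 2 - ∑ i, u i * b i) := by
  have hpos (c : ℝ) : (0 : ℝ) < 2 ^ c := rpow_pos_of_pos two_pos c
  have hmem : ∑ i, u i * a i ∈ {v : ℝ | ∃ x, N x ≤ 1 ∧ (∀ i, x i ≠ 0) ∧
      v = ∑ i, u i * logb 2 |x i|} := by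
    refine ⟨_, ha, fun i => (hpos _).ne', sum_congr rfl fun i _ => ?_⟩
    rw [abs_of_pos (hpos _), logb_rpow two_pos one_lt_two.ne']
  have hub : -entropy u / log 2 - ∑ i, u i * b i ∈ upperBounds {v : ℝ | ∃ x, N x ≤ 1 ∧
      (∀ i, x i ≠ 0) ∧ v = ∑ i, u i * logb 2 |x i|} := by
    rintro _ ⟨x, hx, hx0, rfl⟩
    have hsum : ∑ i, (2 : ℝ) ^ (logb 2 |x i| + b i) ≤ 1 := by
      convert hpair hx hb using 2 with i
      rw [rpow_add two_pos, rpow_logb two_pos one_lt_two.ne' (abs_pos.2 (hx0 i)),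
        abs_of_pos (hpos _)]
    have hgibbs := mem_affineMinorants_neg_entropy_iff.2 hsum u hu
    simp only [mul_add, sum_add_distrib] at hgibbs
    linarith
  exact ⟨le_csSup ⟨_, hub⟩ hmem, csSup_le ⟨_, hmem⟩ hub⟩

end Duality

section SupportNorm

variable {ι : Type*} [Fintype ι] {Y : Set (ι → ℝ)} {x y : ι → ℝ}

/-- The support function of `Y` evaluated at `|x|`: for a bounded set `Y` of nonnegative vectors,
not all vanishing in any one coordinate, it is the smallest lattice norm whose dual unit ball
contains `Y`. -/
noncomputable def supportNorm (Y : Set (ι → ℝ)) (x : ι → ℝ) : ℝ := ⨆ y : Y, ∑ i, |x i| * y.1 i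

theorem bddAbove_range_supportNorm (hbdd : BddAbove Y) (x : ι → ℝ) :
    BddAbove (Set.range fun y : Y => ∑ i, |x i| * y.1 i) := by
  obtain ⟨R, hR⟩ := hbdd
  refine ⟨∑ i, |x i| * R i, ?_⟩
  rintro _ ⟨y, rfl⟩
  exact sum_le_sum fun i _ => mul_le_mul_of_nonneg_left (hR y.2 i) (abs_nonneg _)

theorem le_supportNorm (hbdd : BddAbove Y) (x : ι → ℝ) (hy : y ∈ Y) :
    ∑ i, |x i| * y i ≤ supportNorm Y x :=
  le_ciSup (bddAbove_range_supportNorm hbdd x) ⟨y, hy⟩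

theorem supportNorm_nonneg (hY : ∀ y ∈ Y, 0 ≤ y) (x : ι → ℝ) : 0 ≤ supportNorm Y x :=
  Real.iSup_nonneg fun y => sum_nonneg fun i _ => mul_nonneg (abs_nonneg _) (hY y y.2 i)

theorem isLatticeNorm_supportNorm (hY : ∀ y ∈ Y, 0 ≤ y) (hbdd : BddAbove Y)
    (hpos : ∀ i, ∃ y ∈ Y, 0 < y i) : IsLatticeNorm (supportNorm Y) := by
  refine ⟨supportNorm_nonneg hY, fun x => ⟨fun h => funext fun i => ?_, ?_⟩, fun a x => ?_,
    fun x y => ?_, fun x y hxy => ?_⟩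
  · obtain ⟨y, hy, hyi⟩ := hpos i
    have hle : |x i| * y i ≤ 0 :=
      ((single_le_sum (f := fun i => |x i| * y i)
        (fun j _ => mul_nonneg (abs_nonneg _) (hY y hy j)) (mem_univ i)).trans
        (le_supportNorm hbdd x hy)).trans_eq h
    exact abs_nonpos_iff.1 (nonpos_of_mul_nonpos_left hle hyi)
  · rintro rfl
    simp [supportNorm]
  · simp only [supportNorm, Real.mul_iSup_of_nonneg (abs_nonneg a), mul_sum, Pi.smul_apply,
      smul_eq_mul, abs_mul, mul_assoc]
  · refine Real.iSup_le (fun z => ?_)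
      (add_nonneg (supportNorm_nonneg hY x) (supportNorm_nonneg hY y))
    calc ∑ i, |(x + y) i| * z.1 i
      _ ≤ ∑ i, (|x i| + |y i|) * z.1 i := sum_le_sum fun i _ =>
          mul_le_mul_of_nonneg_right (abs_add_le _ _) (hY z z.2 i)
      _ = ∑ i, |x i| * z.1 i + ∑ i, |y i| * z.1 i := by
          simp only [add_mul, sum_add_distrib]
      _ ≤ _ := add_le_add (le_supportNorm hbdd x z.2) (le_supportNorm hbdd y z.2)
  · refine Real.iSup_le (fun z => (sum_le_sum fun i _ => ?_).trans (le_supportNorm hbdd y z.2))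
      (supportNorm_nonneg hY y)
    exact mul_le_mul_of_nonneg_right (hxy i) (hY z z.2 i)

theorem dualNorm_supportNorm_le_one (hY : ∀ y ∈ Y, 0 ≤ y) (hbdd : BddAbove Y) (hy : y ∈ Y) :
    dualNorm (supportNorm Y) y ≤ 1 := by
  refine Real.sSup_le ?_ zero_le_one
  rintro _ ⟨x, hx, rfl⟩
  exact (sum_le_sum fun i _ => mul_le_mul_of_nonneg_right (le_abs_self _) (hY y hy i)).trans
    ((le_supportNorm hbdd x hy).trans hx)

end SupportNorm

section Representation

open Real

variable {ι : Type*} [Fintype ι] {g g' : (ι → ℝ) → ℝ} {a b : ι → ℝ} {C : ℝ}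

/-- The coordinatewise powers of two of the affine minorants of `g`; they span the dual unit ball of
a norm `N` with `Φ_{N*}` close to `g`. -/
def expMinorants (g : (ι → ℝ) → ℝ) : Set (ι → ℝ) :=
  (fun b i => (2 : ℝ) ^ b i) '' affineMinorants g

theorem bddAbove_expMinorants (g : (ι → ℝ) → ℝ) : BddAbove (expMinorants g) := by
  classical
  refine ⟨fun i => 2 ^ g (Pi.single i 1), ?_⟩
  rintro _ ⟨b, hb, rfl⟩ i
  have hbi := hb _ (single_mem_stdSimplex ℝ i)
  rw [sum_eq_single_of_mem i (mem_univ i) fun j _ hj => by rw [Pi.single_eq_of_ne hj, zero_mul],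
    Pi.single_eq_same, one_mul] at hbi
  exact rpow_le_rpow_of_exponent_le one_le_two hbi

theorem expMinorants_pos : ∀ y ∈ expMinorants g, ∀ i, 0 < y i := by
  rintro _ ⟨b, -, rfl⟩ i
  exact rpow_pos_of_pos two_pos _

theorem supportNorm_expMinorants_le_one
    (hsum : ∀ v ∈ stdSimplex ℝ ι, g v + g' v = -entropy v / log 2) (ha : a ∈ affineMinorants g) :
    supportNorm (expMinorants g') (fun i => 2 ^ a i) ≤ 1 := by
  refine Real.iSup_le ?_ zero_le_one
  rintro ⟨_, b, hb, rfl⟩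
  have hab : a + b ∈ affineMinorants (fun v => -entropy v / log 2) := fun v hv => by
    simp only [Pi.add_apply, mul_add, sum_add_distrib]
    exact (add_le_add (ha v hv) (hb v hv)).trans_eq (hsum v hv)
  convert mem_affineMinorants_neg_entropy_iff.1 hab using 2 with i
  rw [abs_of_pos (rpow_pos_of_pos two_pos _), Pi.add_apply, rpow_add two_pos]

theorem ApproxConvexOn.exists_isLatticeNorm (hg : ContinuousOn g (stdSimplex ℝ ι))
    (hg' : ContinuousOn g' (stdSimplex ℝ ι)) (hC : ApproxConvexOn (stdSimplex ℝ ι) g C)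
    (hC' : ApproxConvexOn (stdSimplex ℝ ι) g' C)
    (hsum : ∀ v ∈ stdSimplex ℝ ι, g v + g' v = -entropy v / log 2) :
    ∃ N, IsLatticeNorm N ∧ ∀ u ∈ stdSimplex ℝ ι,
      |latticeIndicator N u - g u| ≤ C + 1 ∧ |latticeIndicator (dualNorm N) u - g' u| ≤ C + 1 := by
  classical
  have hnonneg : ∀ y ∈ expMinorants g', 0 ≤ y := fun y hy i => (expMinorants_pos y hy i).le
  have hbdd := bddAbove_expMinorants g'
  have hN : IsLatticeNorm (supportNorm (expMinorants g')) :=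
    isLatticeNorm_supportNorm hnonneg hbdd fun i => by
      obtain ⟨b, hb, -⟩ := hC'.exists_mem_affineMinorants hg' (single_mem_stdSimplex ℝ i)
        (sub_one_lt _)
      exact ⟨_, ⟨b, hb, rfl⟩, expMinorants_pos _ ⟨b, hb, rfl⟩ i⟩
  refine ⟨_, hN, fun u hu => ?_⟩
  obtain ⟨a, ha, hau⟩ := hC.exists_mem_affineMinorants hg hu (sub_one_lt _)
  obtain ⟨b, hb, hbu⟩ := hC'.exists_mem_affineMinorants hg' hu (sub_one_lt _)
  have ha1 := supportNorm_expMinorants_le_one hsum ha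
  have hb1 := dualNorm_supportNorm_le_one hnonneg hbdd ⟨b, hb, rfl⟩
  obtain ⟨hl, hr⟩ := latticeIndicator_mem_Icc hu (fun _ _ => sum_abs_mul_abs_le_one hN) ha1 hb1
  obtain ⟨hl', hr'⟩ := latticeIndicator_mem_Icc hu
    (fun y x hy hx => by simpa only [mul_comm] using sum_abs_mul_abs_le_one hN hx hy) hb1 ha1
  have hsum_u := hsum u hu
  constructor <;> rw [abs_le] <;> constructor <;> linarith

theorem EntropyDominated.exists_isLatticeNorm {f : (ι → ℝ) → ℝ} {K : ℝ}
    (hf : ContinuousOn f (stdSimplex ℝ ι))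
    (hdom : EntropyDominated (homExt f) (1 / (2 * log 2)) K)
    (hdom' : EntropyDominated (fun v => -homExt f v) (1 / (2 * log 2)) K) :
    ∃ N, IsLatticeNorm N ∧ ∀ u ∈ stdSimplex ℝ ι,
      |f u - (1 / 2) * (latticeIndicator N u - latticeIndicator (dualNorm N) u)| ≤ K + 1 := by
  have hext : ContinuousOn (homExt f) (stdSimplex ℝ ι) :=
    hf.congr fun v hv => homExt_of_mem_stdSimplex hv
  have hentropy : ContinuousOn (fun v : ι → ℝ => 1 / (2 * log 2) * entropy v) (stdSimplex ℝ ι) :=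
    (continuous_entropy.const_mul _).continuousOn
  have hsum (v : ι → ℝ) : homExt f v - 1 / (2 * log 2) * entropy v
      + (-homExt f v - 1 / (2 * log 2) * entropy v) = -entropy v / log 2 := by
    rw [one_div, mul_inv]
    ring
  obtain ⟨N, hN, hclose⟩ := ApproxConvexOn.exists_isLatticeNorm (hext.fun_sub hentropy)
    (hext.fun_neg.fun_sub hentropy) (hdom.approxConvexOn (homExt_posHomogeneous f))
    (hdom'.approxConvexOn (homExt_posHomogeneous f).neg) fun v _ => hsum v
  refine ⟨N, hN, fun u hu => ?_⟩
  obtain ⟨hΦ, hΦ'⟩ := hclose u hu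
  rw [homExt_of_mem_stdSimplex hu, abs_le] at hΦ hΦ'
  rw [abs_le]
  constructor <;> linarith [hΦ.1, hΦ.2, hΦ'.1, hΦ'.2]

end Representation

end SimplexRepresentation

open SimplexRepresentation in
theorem simplex_representation_by_indicators_general {θ : ℝ} (hθ : θ < 1) : ∃ C : ℝ,
    ∀ {ι : Type*} [Fintype ι] {f : (ι → ℝ) → ℝ}, ContinuousOn f (stdSimplex ℝ ι) →
      diffBound 2 (stdSimplex ℝ ι) f θ →
      ∃ N : (ι → ℝ) → ℝ, IsLatticeNorm N ∧ ∀ u ∈ stdSimplex ℝ ι,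
        |f u - (1 / 2) * (latticeIndicator N u - latticeIndicator (dualNorm N) u)| ≤ C := by
  obtain ⟨K, hK⟩ := exists_entropyDominated (le_max_right θ 0) (max_lt hθ one_pos)
  refine ⟨K + 1, fun {ι} _ f hf hdiff => ?_⟩
  obtain ⟨M, hM⟩ := (isCompact_stdSimplex ℝ ι).exists_bound_of_continuousOn hf
  have hF := isQuasiAdditive_homExt (diffBound_mono hdiff (le_max_left θ 0)) hM
  exact EntropyDominated.exists_isLatticeNorm hf (hK hF) (hK hF.neg)

/-- Theorem 2.9: every continuous `f` on the simplex with `ω₂(f) ≤ 1 − ε` is uniformly close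
to `(1/2)(Φ_X − Φ_{X*})` for some lattice norm. -/
theorem simplex_representation_by_indicators :
    ∀ ε : ℝ, 0 < ε → ε < 1 / 2 → ∃ C : ℝ,
      ∀ (n : ℕ) (f : (Fin (n + 1) → ℝ) → ℝ),
        ContinuousOn f (stdSimplex ℝ (Fin (n + 1))) →
        diffBound 2 (stdSimplex ℝ (Fin (n + 1))) f (1 - ε) →
        ∃ N : (Fin (n + 1) → ℝ) → ℝ, IsLatticeNorm N ∧
          ∀ u ∈ stdSimplex ℝ (Fin (n + 1)),
            |f u - (1 / 2) * (latticeIndicator N u - latticeIndicator (dualNorm N) u)| ≤ C :=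
  fun _ hε _ => (simplex_representation_by_indicators_general (sub_lt_self 1 hε)).imp
    fun _ h _ _ hf hdiff => h hf hdiff
end

section
/- There exist constants c₁, c₂ > 0 such that for every n ≥ 1: (i) every continuous f : B_{ℓ₁ⁿ} → ℝ with ω₂(f;B_{ℓ₁ⁿ}) ≤ 1 admits an affine function φ with sup_{x∈B_{ℓ₁ⁿ}} |f(x) − φ(x)| ≤ c₂ log₂(n+1); and (ii) there exists a continuous f : B_{ℓ₁ⁿ} → ℝ with ω₂(f;B_{ℓ₁ⁿ}) ≤ 1 such that every affine function φ satisfies sup_{x∈B_{ℓ₁ⁿ}} |f(x) − φ(x)| ≥ c₁ log₂(n+1). (Theorem 3.8(a): c₁ log₂(n+1) ≤ w₂(ℓ₁ⁿ) ≤ c₂ log₂(n+1).) -/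
open Finset

/-- The closed unit ball of `ℓ₁ⁿ`. -/
def l1Ball (n : ℕ) : Set (Fin n → ℝ) := {x | ∑ i, |x i| ≤ 1}

/-!
Upper bound: subtract from `f` the affine function that agrees with `f` at `0` and makes the
remainder `g` even on the vertices `±eᵢ`; then `g` is small at `0` and at the vertices and is
midpoint convex up to a constant. Averaging `2 ^ j` vertices by repeated halving costs `j` times
that constant. Once `2 ^ j` exceeds the number of vertices, rounding barycentric weights shows that
every point is the midpoint of such an average and some other point of the ball, so that the
supremum of `g` is controlled by half of itself plus `O(j)`. The symmetry of the ball turns this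
upper bound into a two-sided one.

Lower bound: the entropy `∑ negMulLog xᵢ` has bounded second differences on the ball, because
`t * log t` rescales up to a linear term. It vanishes at `0, e₁, …, eₙ` but is of order `log n` at
their barycentre, so no affine function can be close to it at all these points.
-/

section SecondDifference

variable {E : Type*} [AddCommGroup E] [Module ℝ E] {K : Set E} {f : E → ℝ} {δ : ℝ}

lemma diffBound_two_iff :
    diffBound 2 K f δ ↔ ∀ u ∈ K, ∀ v ∈ K, midpoint ℝ u v ∈ K →
      |f u - 2 * f (midpoint ℝ u v) + f v| ≤ δ := by
  have sum_eq (x h : E) : ∑ j ∈ range (2 + 1), (-1 : ℝ) ^ (2 - j) * (Nat.choose 2 j : ℝ) *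
      f (x + (j : ℝ) • h) = f x - 2 * f (x + h) + f (x + (2 : ℝ) • h) := by
    simp [sum_range_succ]
    ring
  have midpoint_eq (x h : E) : midpoint ℝ x (x + (2 : ℝ) • h) = x + h := by
    rw [midpoint_eq_smul_add, invOf_eq_inv]
    module
  constructor
  · intro hf u hu v hv hmid
    obtain ⟨h, rfl⟩ : ∃ h : E, v = u + (2 : ℝ) • h := ⟨(2⁻¹ : ℝ) • (v - u), by module⟩
    rw [midpoint_eq] at hmid ⊢
    rw [← sum_eq]
    refine hf u h fun j hj => ?_
    interval_cases j <;> simpa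
  · intro hf x h hx
    have hmid : x + h ∈ K := by simpa using hx 1 (by norm_num)
    rw [sum_eq, ← midpoint_eq]
    exact hf x (by simpa using hx 0 (by norm_num)) _ (by simpa using hx 2 le_rfl)
      (by rwa [midpoint_eq])

lemma diffBound.const_mul {m : ℕ} (hf : diffBound m K f δ) (r : ℝ) :
    diffBound m K (fun x => r * f x) (|r| * δ) := by
  intro x h hx
  simp_rw [mul_left_comm _ r, ← mul_sum, abs_mul]
  gcongr
  exact hf x h hx

lemma diffBound.sub_affineMap (hf : diffBound 2 K f δ) (φ : E →ᵃ[ℝ] ℝ) :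
    diffBound 2 K (fun x => f x - φ x) δ := by
  rw [diffBound_two_iff] at hf ⊢
  intro u hu v hv hmid
  convert hf u hu v hv hmid using 2
  rw [φ.map_midpoint, midpoint_eq_smul_add ℝ (φ u), smul_eq_mul, invOf_eq_inv]
  ring

lemma diffBound.abs_add_neg_le (hf : diffBound 2 K f δ) (hzero : (0 : E) ∈ K)
    (hf0 : f 0 = 0) {x : E} (hx : x ∈ K) (hnx : -x ∈ K) : |f x + f (-x)| ≤ δ := by
  have := diffBound_two_iff.mp hf x hx (-x) hnx (by rwa [midpoint_self_neg])
  simpa [midpoint_self_neg, hf0] using this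

end SecondDifference

section ApproxMidpointConvex

variable {E : Type*} [AddCommGroup E] [Module ℝ E]

/-- `g` is midpoint convex on `K` up to an additive error `δ` (approximate convexity in the sense of
Hyers and Ulam), the one-sided form of a bound on the second modulus of smoothness. The average
`(g u + g v) / 2` makes `δ` half the corresponding bound for `diffBound 2`. -/
def ApproxMidpointConvexOn (K : Set E) (δ : ℝ) (g : E → ℝ) : Prop :=
  ∀ u ∈ K, ∀ v ∈ K, g (midpoint ℝ u v) ≤ (g u + g v) / 2 + δ

lemma diffBound.approxMidpointConvexOn {K : Set E} {f : E → ℝ} {δ : ℝ} (hf : diffBound 2 K f δ)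
    (hK : Convex ℝ K) : ApproxMidpointConvexOn K (δ / 2) f := by
  intro u hu v hv
  have := (abs_le.mp (diffBound_two_iff.mp hf u hu v hv (hK.midpoint_mem hu hv))).1
  linarith

lemma exists_multiset_le_card_eq {α : Type*} {R : Multiset α} {k : ℕ} (hk : k ≤ R.card) :
    ∃ T ≤ R, T.card = k := by
  have : 0 < (R.powersetCard k).card := by
    rw [Multiset.card_powersetCard]
    exact Nat.choose_pos hk
  obtain ⟨T, hT⟩ := Multiset.card_pos_iff_exists_mem.mp this
  exact ⟨T, Multiset.mem_powersetCard.mp hT⟩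

lemma exists_multiset_count_le_two_mul {α : Type*} [DecidableEq α] {s : Finset α} {w : α → ℝ}
    (hw₀ : ∀ y ∈ s, 0 ≤ w y) (hw₁ : ∑ y ∈ s, w y = 1) {k : ℕ} (hk : #s ≤ k) :
    ∃ T : Multiset α, T.card = k ∧ (∀ y ∈ T, y ∈ s) ∧
      ∀ y ∈ s, (T.count y : ℝ) ≤ 2 * k * w y := by
  let R : Multiset α := ∑ y ∈ s, Multiset.replicate ⌊2 * k * w y⌋₊ y
  have card_R : k ≤ R.card := by
    have hfloor : ∑ y ∈ s, (2 * k * w y - 1) ≤ ∑ y ∈ s, (⌊2 * k * w y⌋₊ : ℝ) :=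
      sum_le_sum fun y _ => (Nat.sub_one_lt_floor _).le
    have hsum : ∑ y ∈ s, (2 * k * w y - 1) = 2 * k - #s := by
      rw [sum_sub_distrib, ← mul_sum, hw₁]
      simp
    have : (#s : ℝ) ≤ k := by exact_mod_cast hk
    have : (k : ℝ) ≤ ∑ y ∈ s, (⌊2 * k * w y⌋₊ : ℝ) := by linarith
    simpa [R, Multiset.card_sum] using (by exact_mod_cast this)
  have count_R {y : α} (hy : y ∈ s) : R.count y = ⌊2 * k * w y⌋₊ := by
    simp [R, Multiset.count_sum', Multiset.count_replicate, hy]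
  obtain ⟨T, hTR, hT⟩ := exists_multiset_le_card_eq card_R
  refine ⟨T, hT, fun y hy => ?_, fun y hy => ?_⟩
  · obtain ⟨z, hz, hyz⟩ := Multiset.mem_sum.mp (Multiset.mem_of_le hTR hy)
    rwa [Multiset.eq_of_mem_replicate hyz]
  · calc (T.count y : ℝ) ≤ ⌊2 * k * w y⌋₊ := by
          rw [← count_R hy]
          exact_mod_cast Multiset.count_le_of_le y hTR
      _ ≤ 2 * k * w y := Nat.floor_le (by have := hw₀ y hy; positivity)

lemma exists_midpoint_multiset_average {s : Finset E} {x : E} (hx : x ∈ convexHull ℝ (s : Set E))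
    {k : ℕ} (hk₀ : k ≠ 0) (hk : #s ≤ k) :
    ∃ T : Multiset E, T.card = k ∧ (∀ y ∈ T, y ∈ s) ∧
      ∃ z ∈ convexHull ℝ (s : Set E), midpoint ℝ ((k : ℝ)⁻¹ • T.sum) z = x := by
  classical
  obtain ⟨w, hw₀, hw₁, rfl⟩ := Finset.mem_convexHull'.mp hx
  obtain ⟨T, hT, hTs, hcount⟩ := exists_multiset_count_le_two_mul hw₀ hw₁ hk
  have hk' : (0 : ℝ) < k := by positivity
  have sum_count : ∑ y ∈ s, (T.count y : ℝ) = k := by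
    rw [← hT]
    exact_mod_cast Multiset.sum_count_eq_card hTs
  have sum_T : T.sum = ∑ y ∈ s, (T.count y : ℝ) • y := by
    simp_rw [Nat.cast_smul_eq_nsmul]
    exact sum_multiset_count_of_subset T s fun y hy => hTs y (Multiset.mem_toFinset.mp hy)
  refine ⟨T, hT, hTs, ∑ y ∈ s, (2 * w y - (k : ℝ)⁻¹ * T.count y) • y,
    Finset.mem_convexHull'.mpr ⟨_, fun y hy => ?_, ?_, rfl⟩, ?_⟩
  · rw [sub_nonneg, inv_mul_le_iff₀ hk']
    linarith [hcount y hy]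
  · rw [sum_sub_distrib, ← mul_sum, ← mul_sum, hw₁, sum_count, inv_mul_cancel₀ hk'.ne']
    norm_num
  · rw [midpoint_eq_smul_add, sum_T, smul_sum, ← sum_add_distrib, smul_sum, invOf_eq_inv]
    exact sum_congr rfl fun y _ => by module

variable {K : Set E} {δ M : ℝ} {g : E → ℝ}

lemma ApproxMidpointConvexOn.multiset_average_le (hg : ApproxMidpointConvexOn K δ g)
    (hK : Convex ℝ K) {j : ℕ} {T : Multiset E} (hT : T.card = 2 ^ j)
    (hTK : ∀ y ∈ T, y ∈ K) (hM : ∀ y ∈ T, g y ≤ M) :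
    ((2 ^ j : ℝ)⁻¹ • T.sum) ∈ K ∧ g ((2 ^ j : ℝ)⁻¹ • T.sum) ≤ M + j * δ := by
  induction j generalizing T with
  | zero =>
    obtain ⟨y, rfl⟩ := Multiset.card_eq_one.mp (by simpa using hT)
    simp_all
  | succ j ih =>
    obtain ⟨T₁, hT₁, hcard₁⟩ := exists_multiset_le_card_eq (R := T) (k := 2 ^ j) (by grind)
    obtain ⟨T₂, rfl⟩ := Multiset.le_iff_exists_add.mp hT₁
    have hcard₂ : T₂.card = 2 ^ j := by
      rw [Multiset.card_add, pow_succ] at hT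
      lia
    obtain ⟨hmem₁, hle₁⟩ := ih hcard₁ (fun y hy => hTK y (by simp [hy]))
      fun y hy => hM y (by simp [hy])
    obtain ⟨hmem₂, hle₂⟩ := ih hcard₂ (fun y hy => hTK y (by simp [hy]))
      fun y hy => hM y (by simp [hy])
    have hmid : (2 ^ (j + 1) : ℝ)⁻¹ • (T₁ + T₂).sum =
        midpoint ℝ ((2 ^ j : ℝ)⁻¹ • T₁.sum) ((2 ^ j : ℝ)⁻¹ • T₂.sum) := by
      rw [midpoint_eq_smul_add, Multiset.sum_add, invOf_eq_inv, ← smul_add, smul_smul, pow_succ',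
        mul_inv]
    rw [hmid]
    refine ⟨hK.midpoint_mem hmem₁ hmem₂, (hg _ hmem₁ _ hmem₂).trans ?_⟩
    push_cast
    linarith

/- Every point of the hull is the midpoint of an average of `2 ^ j` vertices and another point of
the hull, so the supremum `S` of `g` satisfies `S ≤ (M + j * δ + S) / 2 + δ`. -/
theorem ApproxMidpointConvexOn.le_of_mem_convexHull {s : Finset E}
    (hg : ApproxMidpointConvexOn (convexHull ℝ (s : Set E)) δ g)
    (hbdd : BddAbove (g '' convexHull ℝ (s : Set E))) (hM : ∀ y ∈ s, g y ≤ M) {j : ℕ}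
    (hj : #s ≤ 2 ^ j) {x : E} (hx : x ∈ convexHull ℝ (s : Set E)) :
    g x ≤ M + (j + 2) * δ := by
  set S := sSup (g '' convexHull ℝ (s : Set E))
  have le_S {y : E} (hy : y ∈ convexHull ℝ (s : Set E)) : g y ≤ S :=
    le_csSup hbdd (Set.mem_image_of_mem g hy)
  have halving : ∀ r ∈ g '' convexHull ℝ (s : Set E), r ≤ (M + j * δ + S) / 2 + δ := by
    rintro _ ⟨y, hy, rfl⟩
    obtain ⟨T, hT, hTs, z, hz, rfl⟩ :=
      exists_midpoint_multiset_average hy (pow_ne_zero j two_ne_zero) hj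
    push_cast
    obtain ⟨hmem, hle⟩ := hg.multiset_average_le (convex_convexHull ℝ _) hT
      (fun y hy => subset_convexHull ℝ _ (hTs y hy)) fun y hy => hM y (hTs y hy)
    linarith [hg _ hmem z hz, le_S hz]
  have : S ≤ (M + j * δ + S) / 2 + δ := csSup_le (Set.Nonempty.image g ⟨x, hx⟩) halving
  linarith [le_S hx]

end ApproxMidpointConvex

section L1Ball

variable {n : ℕ}

lemma mem_l1Ball {x : Fin n → ℝ} : x ∈ l1Ball n ↔ ∑ i, |x i| ≤ 1 := Iff.rfl

lemma zero_mem_l1Ball : (0 : Fin n → ℝ) ∈ l1Ball n := by simp [mem_l1Ball]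

lemma single_mem_l1Ball (i : Fin n) {t : ℝ} (ht : |t| ≤ 1) : Pi.single i t ∈ l1Ball n := by
  simpa [mem_l1Ball, Pi.single_apply, apply_ite abs] using ht

lemma neg_mem_l1Ball {x : Fin n → ℝ} (hx : x ∈ l1Ball n) : -x ∈ l1Ball n := by
  simpa [mem_l1Ball] using hx

lemma convex_l1Ball : Convex ℝ (l1Ball n) := by
  have l1Ball_eq : l1Ball n = (WithLp.linearEquiv 1 ℝ (Fin n → ℝ)).symm.toLinearMap ⁻¹'
      Metric.closedBall 0 1 := by
    ext x
    simp [mem_l1Ball, PiLp.norm_eq_of_L1]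
  rw [l1Ball_eq]
  exact (convex_closedBall _ _).linear_preimage _

/-- The vertices of the cross-polytope `l1Ball n`, together with its centre. -/
noncomputable def l1Vertices (n : ℕ) : Finset (Fin n → ℝ) :=
  insert 0 (univ.image (fun i => Pi.single i 1) ∪ univ.image fun i => Pi.single i (-1))

lemma forall_mem_l1Vertices {p : (Fin n → ℝ) → Prop} :
    (∀ y ∈ l1Vertices n, p y) ↔ p 0 ∧ ∀ i, p (Pi.single i 1) ∧ p (Pi.single i (-1)) := by
  simp only [l1Vertices, mem_insert, mem_union, mem_image, mem_univ, true_and]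
  grind

lemma card_l1Vertices_le : #(l1Vertices n) ≤ 2 * n + 1 := by
  have card_image (t : ℝ) : #(univ.image fun i : Fin n => (Pi.single i t : Fin n → ℝ)) ≤ n :=
    card_image_le.trans_eq (card_fin n)
  calc #(l1Vertices n) ≤ _ + 1 := card_insert_le _ _
    _ ≤ (n + n) + 1 := by grw [card_union_le, card_image, card_image]
    _ = 2 * n + 1 := by ring

lemma l1Ball_eq_convexHull : l1Ball n = convexHull ℝ (l1Vertices n : Set (Fin n → ℝ)) := by
  obtain ⟨hzero, hvertex⟩ := forall_mem_l1Vertices.mp fun y hy =>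
    subset_convexHull ℝ (l1Vertices n : Set (Fin n → ℝ)) hy
  refine Set.Subset.antisymm (fun x hx => ?_) (convexHull_min (forall_mem_l1Vertices.mpr
    ⟨zero_mem_l1Ball, fun i => ⟨single_mem_l1Ball i (by simp), single_mem_l1Ball i (by simp)⟩⟩)
    convex_l1Ball)
  obtain hsum | hsum := (sum_nonneg fun i _ => abs_nonneg (x i)).eq_or_lt'
  · have : x = 0 := by
      ext i
      simpa using (sum_eq_zero_iff_of_nonneg fun i _ => abs_nonneg (x i)).mp hsum i (mem_univ i)
    rwa [this]
  · let p (i : Fin n) : Fin n → ℝ := Pi.single i (if 0 ≤ x i then 1 else -1)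
    have hp (i : Fin n) : p i ∈ convexHull ℝ (l1Vertices n : Set (Fin n → ℝ)) := by
      dsimp only [p]
      split_ifs
      exacts [(hvertex i).1, (hvertex i).2]
    have abs_smul_p (i : Fin n) : |x i| • p i = Pi.single i (x i) := by
      rw [← Pi.single_smul]
      grind [abs_of_nonneg, abs_of_neg, smul_eq_mul]
    have hx_eq : x = (∑ i, |x i|) • univ.centerMass (fun i => |x i|) p := by
      rw [centerMass, smul_smul, mul_inv_cancel₀ hsum.ne', one_smul]
      simp_rw [abs_smul_p, univ_sum_single]
    rw [hx_eq]
    exact (convex_convexHull ℝ _).smul_mem_of_zero_mem hzero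
      ((convex_convexHull ℝ _).centerMass_mem (fun i _ => abs_nonneg _) hsum fun i _ => hp i)
      ⟨hsum.le, hx⟩

lemma isCompact_l1Ball : IsCompact (l1Ball n) := by
  rw [l1Ball_eq_convexHull]
  exact (l1Vertices n).finite_toSet.isCompact_convexHull ℝ

/-- The affine function with constant term `c` and coefficient vector `a`. -/
def coordAffineMap {ι : Type*} [Fintype ι] (c : ℝ) (a : ι → ℝ) : (ι → ℝ) →ᵃ[ℝ] ℝ :=
  (dotProductBilin ℝ ℝ a).toAffineMap + AffineMap.const ℝ _ c

lemma coordAffineMap_apply {ι : Type*} [Fintype ι] (c : ℝ) (a x : ι → ℝ) :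
    coordAffineMap c a x = c + ∑ i, a i * x i := by
  simp [coordAffineMap, dotProduct, add_comm]

lemma continuous_coordAffineMap {ι : Type*} [Fintype ι] (c : ℝ) (a : ι → ℝ) :
    Continuous (coordAffineMap c a) := by
  simp_rw [funext (coordAffineMap_apply c a)]
  fun_prop

lemma coordAffineMap_single {ι : Type*} [Fintype ι] [DecidableEq ι] (c : ℝ) (a : ι → ℝ) (i : ι)
    (t : ℝ) : coordAffineMap c a (Pi.single i t) = c + a i * t := by
  simp [coordAffineMap_apply, Pi.single_apply]

lemma card_l1Vertices_le_two_pow : #(l1Vertices n) ≤ 2 ^ (Nat.log 2 n + 2) := by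
  have := Nat.lt_pow_succ_log_self one_lt_two n
  grind [card_l1Vertices_le (n := n)]

lemma abs_le_of_diffBound_of_apply_vertex {g : (Fin n → ℝ) → ℝ} {δ : ℝ}
    (hbdd : BddAbove (g '' l1Ball n)) (hg : diffBound 2 (l1Ball n) g δ) (hg₀ : g 0 = 0)
    (hg_vertex : ∀ i, g (Pi.single i (-1)) = g (Pi.single i 1)) {x : Fin n → ℝ}
    (hx : x ∈ l1Ball n) : |g x| ≤ (Nat.log 2 n + 7) / 2 * δ := by
  have abs_add_neg_le {y : Fin n → ℝ} (hy : y ∈ l1Ball n) : |g y + g (-y)| ≤ δ :=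
    hg.abs_add_neg_le zero_mem_l1Ball hg₀ hy (neg_mem_l1Ball hy)
  have δ_nonneg : 0 ≤ δ := (abs_nonneg _).trans (abs_add_neg_le hx)
  have vertex_le : ∀ y ∈ l1Vertices n, g y ≤ δ / 2 := by
    refine forall_mem_l1Vertices.mpr ⟨by rw [hg₀]; positivity, fun i => ?_⟩
    have := (abs_le.mp (abs_add_neg_le (single_mem_l1Ball i (t := 1) (by simp)))).2
    rw [← Pi.single_neg, hg_vertex] at this
    constructor <;> grind
  have upper {y : Fin n → ℝ} (hy : y ∈ l1Ball n) : g y ≤ (Nat.log 2 n + 5) / 2 * δ := by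
    have hg_approx := hg.approxMidpointConvexOn convex_l1Ball
    rw [l1Ball_eq_convexHull] at hg_approx hbdd hy
    have := hg_approx.le_of_mem_convexHull hbdd vertex_le card_l1Vertices_le_two_pow hy
    push_cast at this
    linarith
  have lower : -(δ + (Nat.log 2 n + 5) / 2 * δ) ≤ g x := by
    linarith [(abs_le.mp (abs_add_neg_le hx)).1, upper (neg_mem_l1Ball hx)]
  exact abs_le.mpr ⟨by linarith, by linarith [upper hx]⟩

/- The approximant interpolates `f` at `0` and has the slope of `f` along each diagonal
`[-eᵢ, eᵢ]`. -/
theorem exists_affine_abs_sub_le_of_diffBound {f : (Fin n → ℝ) → ℝ} {δ : ℝ}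
    (hbdd : BddAbove (f '' l1Ball n)) (hf : diffBound 2 (l1Ball n) f δ) :
    ∃ (c : ℝ) (a : Fin n → ℝ), ∀ x ∈ l1Ball n,
      |f x - (c + ∑ i, a i * x i)| ≤ (Nat.log 2 n + 7) / 2 * δ := by
  let a (i : Fin n) : ℝ := (f (Pi.single i 1) - f (Pi.single i (-1))) / 2
  let φ := coordAffineMap (f 0) a
  have sub_bdd : BddAbove ((fun x => f x - φ x) '' l1Ball n) := by
    obtain ⟨B, hB⟩ := hbdd
    obtain ⟨A, hA⟩ := isCompact_l1Ball.bddBelow_image (f := φ)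
      (continuous_coordAffineMap _ _).continuousOn
    refine ⟨B - A, Set.forall_mem_image.mpr fun x hx => ?_⟩
    exact sub_le_sub (hB (Set.mem_image_of_mem f hx)) (hA (Set.mem_image_of_mem φ hx))
  refine ⟨f 0, a, fun x hx => ?_⟩
  rw [← coordAffineMap_apply]
  refine abs_le_of_diffBound_of_apply_vertex sub_bdd (hf.sub_affineMap φ) ?_ (fun i => ?_) hx
  · simp [φ, coordAffineMap_apply]
  · simp only [φ, coordAffineMap_single, a]
    ring

end L1Ball

section JensenGap

/- The Jensen gap of `f` is unchanged by subtracting `φ`. -/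
lemma abs_sub_sum_mul_lt_of_abs_sub_affineMap {E ι : Type*} [AddCommGroup E] [Module ℝ E]
    [Fintype ι] {f : E → ℝ} {φ : E →ᵃ[ℝ] ℝ} {w : ι → ℝ} {p : ι → E} {ε : ℝ}
    (hw₀ : ∀ i, 0 ≤ w i) (hw₁ : ∑ i, w i = 1) (hp : ∀ i, |f (p i) - φ (p i)| ≤ ε)
    (hx : |f (∑ i, w i • p i) - φ (∑ i, w i • p i)| < ε) :
    |f (∑ i, w i • p i) - ∑ i, w i * f (p i)| < 2 * ε := by
  have φ_sum : φ (∑ i, w i • p i) = ∑ i, w i * φ (p i) := by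
    simpa [affineCombination_eq_linear_combination, hw₁] using
      univ.map_affineCombination p w hw₁ φ
  have vertex_error : |∑ i, w i * (f (p i) - φ (p i))| ≤ ε :=
    calc _ ≤ ∑ i, w i * |f (p i) - φ (p i)| := by
          grw [abs_sum_le_sum_abs]
          simp_rw [abs_mul, abs_of_nonneg (hw₀ _)]
          rfl
      _ ≤ ∑ i, w i * ε := by
          gcongr with i
          exacts [hw₀ i, hp i]
      _ = ε := by rw [← sum_mul, hw₁, one_mul]
  have gap_eq : f (∑ i, w i • p i) - ∑ i, w i * f (p i) =
      (f (∑ i, w i • p i) - φ (∑ i, w i • p i)) - ∑ i, w i * (f (p i) - φ (p i)) := by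
    simp_rw [mul_sub, sum_sub_distrib, φ_sum]
    ring
  rw [gap_eq]
  linarith [abs_sub (f (∑ i, w i • p i) - φ (∑ i, w i • p i)) (∑ i, w i * (f (p i) - φ (p i)))]

end JensenGap

section Entropy

open Real

lemma abs_negMulLog_le_one {t : ℝ} (ht : |t| ≤ 1) : |negMulLog t| ≤ 1 := by
  obtain rfl | ht₀ := eq_or_ne t 0
  · simp
  have := (abs_log_mul_self_lt |t| (abs_pos.mpr ht₀) ht).le
  rwa [log_abs, abs_mul, abs_abs, ← abs_mul, mul_comm, ← abs_neg, ← neg_mul] at this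

lemma abs_negMulLog_add_mul_log_le {t S : ℝ} (ht : |t| ≤ S) :
    |negMulLog t + t * log S| ≤ S := by
  obtain rfl | hS := ((abs_nonneg t).trans ht).eq_or_lt
  · simp [abs_nonpos_iff.mp ht]
  have rescale : negMulLog t + t * log S = S * negMulLog (t / S) := by
    conv_lhs => rw [← mul_div_cancel₀ t hS.ne', negMulLog_mul, negMulLog]
    ring
  rw [rescale, abs_mul, abs_of_pos hS]
  refine mul_le_of_le_one_right hS.le (abs_negMulLog_le_one ?_)
  rwa [abs_div, abs_of_pos hS, div_le_one hS]

/- Corrections `t * log (|a| + |b|)` are linear in `t` and drop out of the second difference. -/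
lemma abs_secondDifference_negMulLog_le (a b : ℝ) :
    |negMulLog a - 2 * negMulLog (midpoint ℝ a b) + negMulLog b| ≤ 4 * (|a| + |b|) := by
  have midpoint_eq : midpoint ℝ a b = (a + b) / 2 := by
    rw [midpoint_eq_smul_add, invOf_eq_inv, smul_eq_mul, inv_mul_eq_div]
  rw [midpoint_eq]
  have ha : |a| ≤ |a| + |b| := le_add_of_nonneg_right (abs_nonneg b)
  have hb : |b| ≤ |a| + |b| := le_add_of_nonneg_left (abs_nonneg a)
  have hab : |(a + b) / 2| ≤ |a| + |b| := by
    rw [abs_div, abs_two]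
    linarith [abs_add_le a b, abs_nonneg (a + b)]
  have ea := abs_le.mp (abs_negMulLog_add_mul_log_le ha)
  have eb := abs_le.mp (abs_negMulLog_add_mul_log_le hb)
  have eab := abs_le.mp (abs_negMulLog_add_mul_log_le hab)
  exact abs_le.mpr ⟨by linarith, by linarith⟩

/-- The Shannon entropy formula applied coordinatewise to an arbitrary real vector. It is the
extremal function for the lower bound; at negative coordinates `negMulLog` is odd. -/
noncomputable def coordEntropy {ι : Type*} [Fintype ι] (x : ι → ℝ) : ℝ := ∑ i, negMulLog (x i)

lemma continuous_coordEntropy {ι : Type*} [Fintype ι] :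
    Continuous (coordEntropy : (ι → ℝ) → ℝ) := by
  unfold coordEntropy
  fun_prop

lemma coordEntropy_zero {ι : Type*} [Fintype ι] : coordEntropy (0 : ι → ℝ) = 0 := by
  simp [coordEntropy]

lemma coordEntropy_single_one {ι : Type*} [Fintype ι] [DecidableEq ι] (i : ι) :
    coordEntropy (Pi.single i 1) = 0 := by
  simp [coordEntropy, Pi.single_apply, apply_ite negMulLog]

lemma diffBound_coordEntropy (n : ℕ) : diffBound 2 (l1Ball n) coordEntropy 8 := by
  refine diffBound_two_iff.mpr fun u hu v hv _ => ?_
  calc |coordEntropy u - 2 * coordEntropy (midpoint ℝ u v) + coordEntropy v|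
      = |∑ i, (negMulLog (u i) - 2 * negMulLog (midpoint ℝ (u i) (v i)) + negMulLog (v i))| := by
        simp [coordEntropy, sum_add_distrib, sum_sub_distrib, mul_sum]
    _ ≤ ∑ i, 4 * (|u i| + |v i|) :=
        (abs_sum_le_sum_abs _ _).trans
          (sum_le_sum fun i _ => abs_secondDifference_negMulLog_le (u i) (v i))
    _ = 4 * (∑ i, |u i| + ∑ i, |v i|) := by rw [← mul_sum, sum_add_distrib]
    _ ≤ 8 := by linarith [mem_l1Ball.mp hu, mem_l1Ball.mp hv]

lemma half_log_le_coordEntropy_const (n : ℕ) :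
    log (n + 1) / 2 ≤ coordEntropy fun _ : Fin n => ((n : ℝ) + 1)⁻¹ := by
  obtain rfl | hn := n.eq_zero_or_pos
  · simp [coordEntropy]
  have hn' : (1 : ℝ) ≤ n := by exact_mod_cast hn
  have hlog : 0 ≤ log ((n : ℝ) + 1) := log_nonneg (by linarith)
  have entropy_eq : coordEntropy (fun _ : Fin n => ((n : ℝ) + 1)⁻¹) =
      n / (n + 1) * log (n + 1) := by
    simp [coordEntropy, negMulLog]
    ring
  rw [entropy_eq, div_eq_inv_mul]
  gcongr
  rw [le_div_iff₀ (by positivity)]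
  linarith

/- The error is tested at `0, e₁, …, eₙ` and at their barycentre, whose Jensen gap must be less than
twice the largest error. -/
theorem exists_log_le_abs_coordEntropy_sub_affine {n : ℕ} (c : ℝ) (a : Fin n → ℝ) :
    ∃ x ∈ l1Ball n, log (n + 1) / 4 ≤ |coordEntropy x - (c + ∑ i, a i * x i)| := by
  by_contra! hlt
  simp_rw [← coordAffineMap_apply] at hlt
  let p : Fin (n + 1) → Fin n → ℝ := Fin.cons 0 fun i => Pi.single i 1
  have p_mem : ∀ k, p k ∈ l1Ball n :=
    Fin.forall_fin_succ.mpr ⟨zero_mem_l1Ball, fun i => single_mem_l1Ball i (by simp)⟩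
  have entropy_p : ∀ k, coordEntropy (p k) = 0 :=
    Fin.forall_fin_succ.mpr ⟨coordEntropy_zero, coordEntropy_single_one⟩
  have weights_sum : ∑ _k : Fin (n + 1), ((n : ℝ) + 1)⁻¹ = 1 := by
    simp [mul_inv_cancel₀ (n.cast_add_one_ne_zero : (n : ℝ) + 1 ≠ 0)]
  have barycentre_eq : ∑ k, ((n : ℝ) + 1)⁻¹ • p k = fun _ => ((n : ℝ) + 1)⁻¹ := by
    ext i
    simp [p, Fin.sum_univ_succ, Pi.single_apply]
  have barycentre_mem : ∑ k, ((n : ℝ) + 1)⁻¹ • p k ∈ l1Ball n :=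
    convex_l1Ball.sum_mem (fun _ _ => by positivity) weights_sum fun k _ => p_mem k
  have gap_lt := abs_sub_sum_mul_lt_of_abs_sub_affineMap (fun _ => by positivity) weights_sum
    (fun k => (hlt _ (p_mem k)).le) (hlt _ barycentre_mem)
  simp only [entropy_p, mul_zero, sum_const_zero, sub_zero, barycentre_eq] at gap_lt
  linarith [(abs_lt.mp gap_lt).2, half_log_le_coordEntropy_const n]

end Entropy

lemma natLog_add_seven_div_two_le {n : ℕ} (hn : 1 ≤ n) :
    ((Nat.log 2 n : ℝ) + 7) / 2 ≤ 4 * Real.logb 2 (n + 1) := by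
  have hn' : (1 : ℝ) ≤ n := by exact_mod_cast hn
  have one_le : 1 ≤ Real.logb 2 ((n : ℝ) + 1) := by
    rw [Real.le_logb_iff_rpow_le one_lt_two (by positivity), Real.rpow_one]
    linarith
  have natLog_le : (Nat.log 2 n : ℝ) ≤ Real.logb 2 ((n : ℝ) + 1) :=
    (Real.natLog_le_logb n 2).trans
      (Real.logb_le_logb_of_le one_lt_two (by positivity) (by linarith))
  linarith

theorem whitney_l1_two_sided_general :
    ∃ c₁ c₂ : ℝ, 0 < c₁ ∧ 0 < c₂ ∧ ∀ n : ℕ, 1 ≤ n →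
      ((∀ f : (Fin n → ℝ) → ℝ, BddAbove (f '' l1Ball n) → diffBound 2 (l1Ball n) f 1 →
          ∃ (c : ℝ) (a : Fin n → ℝ), ∀ x ∈ l1Ball n,
            |f x - (c + ∑ i, a i * x i)| ≤ c₂ * Real.logb 2 (n + 1)) ∧
       (∃ f : (Fin n → ℝ) → ℝ, Continuous f ∧ diffBound 2 (l1Ball n) f 1 ∧
          ∀ (c : ℝ) (a : Fin n → ℝ), ∃ x ∈ l1Ball n,
            c₁ * Real.logb 2 (n + 1) ≤ |f x - (c + ∑ i, a i * x i)|)) := by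
  refine ⟨Real.log 2 / 32, 4, by have := Real.log_pos one_lt_two; positivity, by norm_num,
    fun n hn => ⟨fun f hbdd hf => ?_, fun x => 1 / 8 * coordEntropy x,
      continuous_const.mul continuous_coordEntropy, ?_, fun c a => ?_⟩⟩
  · obtain ⟨c, a, h⟩ := exists_affine_abs_sub_le_of_diffBound hbdd hf
    refine ⟨c, a, fun x hx => (h x hx).trans ?_⟩
    simpa using natLog_add_seven_div_two_le hn
  · simpa using (diffBound_coordEntropy n).const_mul (1 / 8)
  · obtain ⟨x, hx, hlog⟩ :=
      exists_log_le_abs_coordEntropy_sub_affine (8 * c) fun i => 8 * a i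
    refine ⟨x, hx, ?_⟩
    have error_eq : coordEntropy x - (8 * c + ∑ i, 8 * a i * x i) =
        8 * (1 / 8 * coordEntropy x - (c + ∑ i, a i * x i)) := by
      simp_rw [mul_assoc, ← mul_sum]
      ring
    rw [error_eq, abs_mul, Nat.abs_ofNat] at hlog
    have := Real.log_pos one_lt_two
    calc Real.log 2 / 32 * Real.logb 2 (n + 1) = Real.log (n + 1) / 32 := by
          rw [Real.logb]
          field_simp
      _ ≤ _ := by linarith

/-- Theorem 3.8(a): `c₁ log₂(n+1) ≤ w₂(ℓ₁ⁿ) ≤ c₂ log₂(n+1)`. -/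
theorem whitney_l1_two_sided :
    ∃ c₁ c₂ : ℝ, 0 < c₁ ∧ 0 < c₂ ∧ ∀ n : ℕ, 1 ≤ n →
      ((∀ f : (Fin n → ℝ) → ℝ, ContinuousOn f (l1Ball n) → diffBound 2 (l1Ball n) f 1 →
          ∃ (c : ℝ) (a : Fin n → ℝ), ∀ x ∈ l1Ball n,
            |f x - (c + ∑ i, a i * x i)| ≤ c₂ * Real.logb 2 (n + 1)) ∧
       (∃ f : (Fin n → ℝ) → ℝ, ContinuousOn f (l1Ball n) ∧ diffBound 2 (l1Ball n) f 1 ∧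
          ∀ (c : ℝ) (a : Fin n → ℝ), ∃ x ∈ l1Ball n,
            c₁ * Real.logb 2 (n + 1) ≤ |f x - (c + ∑ i, a i * x i)|)) := by
  obtain ⟨c₁, c₂, hc₁, hc₂, h⟩ := whitney_l1_two_sided_general
  exact ⟨c₁, c₂, hc₁, hc₂, fun n hn =>
    ⟨fun f hf => (h n hn).1 f (isCompact_l1Ball.bddAbove_image hf),
      (h n hn).2.imp fun f hf => ⟨hf.1.continuousOn, hf.2⟩⟩⟩
end
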